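/- arXiv:2301.09104 — 3 statements merged into one kernel-verified Lean document; each statement's English description precedes it below -/
import Mathlib

section
/- Let λ̃ ∈ ℕ^{n+k+2} be a weight vector on the variables of S such that (i) every element of the sequence 𝒜 is λ̃-homogeneous, i.e. λ̃ assigns equal weights to x_{v_j} and x_{i_{j+2}} for 0 ≤ j ≤ k−2, to x_{s_1} and x_{i_{k−1}}, and to x_{s_2} and x_{i_1}; and (ii) the λ̃-initial ideal of I_{Π,M} equals M_{Π,M}. Let I_{Π,M,t} ⊆ S[t] be the λ̃-homogenization of I_{Π,M}, namely the ideal generated by g^h for all g ∈ I_{Π,M}, where for g = Σ_u a_u x^u one sets g^h = Σ_u a_u x^u t^{w−λ̃·u} with w = max{λ̃·u : a_u ≠ 0}. Then 𝒜 is a regular sequence on S[t]/I_{Π,M,t}. -/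
noncomputable section

open MvPolynomial

/-- Variable type of `S = K[x_1,…,x_{n+1}, x_{v_0},…,x_{v_{k-2}}, x_{s_1}, x_{s_2}]`,
a polynomial ring in `n + k + 2` variables. -/
abbrev SVar (n k : ℕ) := Fin (n + 1) ⊕ (Fin (k - 1) ⊕ Fin 2)

/-- The variable `x_j` of `S` (`1 ≤ j ≤ n + 1`). -/
def xvS (n k : ℕ) (j : ℕ) : SVar n k :=
  Sum.inl ⟨(j - 1) % (n + 1), Nat.mod_lt _ (Nat.succ_pos n)⟩

/-- The variable `x_{v_j}` of `S` (`0 ≤ j ≤ k - 2`). -/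
def vvS (n k : ℕ) (j : ℕ) : SVar n k :=
  if h : j < k - 1 then Sum.inr (Sum.inl ⟨j, h⟩) else Sum.inl ⟨0, Nat.succ_pos n⟩

/-- The variable `x_{s_1}` of `S`. -/
def s1S (n k : ℕ) : SVar n k := Sum.inr (Sum.inr 0)

/-- The variable `x_{s_2}` of `S`. -/
def s2S (n k : ℕ) : SVar n k := Sum.inr (Sum.inr 1)

/-- `as` is a regular sequence on the module `R/N`:  each `as_j` is a nonzerodivisor on
`R/(N + (as_0, …, as_{j-1}))` and `R/(N + (as))` is nonzero. -/
def IsRegSeqOnQuot (R : Type*) [CommRing R] (as : List R) (N : Ideal R) : Prop :=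
  (∀ (j : ℕ) (hj : j < as.length) (f : R),
      as.get ⟨j, hj⟩ * f ∈ N ⊔ Ideal.span {a | a ∈ as.take j} →
      f ∈ N ⊔ Ideal.span {a | a ∈ as.take j}) ∧
  N ⊔ Ideal.span {a | a ∈ as} ≠ ⊤

open Classical in
/-- The `λ`-weight of an exponent vector. -/
def wdegS (σ : Type*) [Fintype σ] (lam : σ → ℕ) (u : σ →₀ ℕ) : ℕ := ∑ s, lam s * u s

open Classical in
/-- The `λ`-initial form of a polynomial: the sum of its terms of maximal `λ`-weight. -/
def initFormS (σ : Type*) [Fintype σ] (K : Type*) [Field K] (lam : σ → ℕ)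
    (f : MvPolynomial σ K) : MvPolynomial σ K :=
  ∑ u ∈ f.support.filter (fun u => wdegS σ lam u = f.support.sup (wdegS σ lam)),
    monomial u (coeff u f)

/-- The `λ`-initial ideal of an ideal. -/
def initIdealS (σ : Type*) [Fintype σ] (K : Type*) [Field K] (lam : σ → ℕ)
    (I : Ideal (MvPolynomial σ K)) : Ideal (MvPolynomial σ K) :=
  Ideal.span { g | ∃ f ∈ I, f ≠ 0 ∧ g = initFormS σ K lam f }

open Classical in
/-- The `λ`-homogenization `g^h = ∑_u a_u x^u t^{w - λ·u}` of `g = ∑_u a_u x^u`,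
where `w = max{λ·u : a_u ≠ 0}`, as an element of `S[t]`. -/
def homogPoly (σ : Type*) [Fintype σ] (K : Type*) [Field K] (lam : σ → ℕ)
    (g : MvPolynomial σ K) : Polynomial (MvPolynomial σ K) :=
  ∑ u ∈ g.support, Polynomial.C (monomial u (coeff u g)) *
    Polynomial.X ^ (g.support.sup (wdegS σ lam) - wdegS σ lam u)

/-- The `λ`-homogenization of an ideal: the ideal of `S[t]` generated by all `g^h`, `g ∈ I`. -/
def homogIdeal (σ : Type*) [Fintype σ] (K : Type*) [Field K] (lam : σ → ℕ)
    (I : Ideal (MvPolynomial σ K)) : Ideal (Polynomial (MvPolynomial σ K)) :=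
  Ideal.span { h | ∃ g ∈ I, h = homogPoly σ K lam g }

/-
Let `I_t ⊆ S[t]` be the homogenization of `I`. Since `t` is a nonzerodivisor modulo `I_t` and
`S[t]/(I_t, t) = S/in_λ(I)`, a sequence of `λ`-homogeneous elements which is regular on `S/in_λ(I)`
is also regular on `S[t]/I_t`: let `Q` be the sum of `I_t` and some first elements of the sequence,
and let `a` be the next one. Regularity modulo `t` shows that `a f ∈ Q` forces `f ∈ Q + (t^m)` for
all `m`, hence `f ∈ Q`, as `t` has positive degree and `Q` is homogeneous.

It remains to treat the monomial ideal of antidiagonal products. Let `a_m`, `b_m` be the entries of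
column `m`, and let `M_m` be generated by the antidiagonal products of the first `m` columns and by
all `a_c` with `c ≥ m`. Then `M_{m+1} + (a_m) = M_m`, while `M_{m+1} : a_m` is generated by the
variables `b_c`, `c < m`, and `a_c`, `c > m`. The exact sequences
`0 → S/(M_{m+1} : a_m) → S/M_{m+1} → S/M_m → 0` thus reduce weak regularity on `S/M_n` to quotients
by variables. On such a quotient, dividing by a difference `x_y - x_{w(y)}` of two variables
amounts, possibly after a linear change of coordinates, to killing one more variable.
-/

section WeaklyRegular

open RingTheory.Sequence

variable {R : Type*} [CommRing R]

lemma isWeaklyRegular_of_exact {M₁ M₂ M₃ : Type*} [AddCommGroup M₁] [AddCommGroup M₂]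
    [AddCommGroup M₃] [Module R M₁] [Module R M₂] [Module R M₃] {f : M₁ →ₗ[R] M₂}
    {g : M₂ →ₗ[R] M₃} (hf : Function.Injective f) (hfg : Function.Exact f g)
    (hg : Function.Surjective g) {rs : List R} (h₁ : IsWeaklyRegular M₁ rs)
    (h₃ : IsWeaklyRegular M₃ rs) : IsWeaklyRegular M₂ rs := by
  induction rs generalizing M₁ M₂ M₃ with
  | nil => exact .nil R M₂
  | cons r rs ih =>
    rw [isWeaklyRegular_cons_iff] at h₁ h₃ ⊢
    refine ⟨isSMulRegular_of_range_eq_ker hf hfg.linearMap_ker_eq.symm h₁.1 h₃.1, ?_⟩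
    have hexact : Function.Exact (0 : PUnit →ₗ[R] M₁) f :=
      (LinearMap.exact_zero_iff_injective PUnit f).mpr hf
    have hinj : Function.Injective (QuotSMulTop.map r f) := by
      rw [← LinearMap.exact_zero_iff_injective (QuotSMulTop r PUnit),
        ← map_zero (QuotSMulTop.map r)]
      exact QuotSMulTop.map_first_exact_on_four_term_exact_of_isSMulRegular_last hexact hfg h₃.1
    exact ih hinj (QuotSMulTop.map_exact r hfg hg) (QuotSMulTop.map_surjective r hg) h₁.2 h₃.2

lemma mem_sup_span_singleton_iff_exists_sub_mem {J : Ideal R} {a f : R} :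
    f ∈ J ⊔ Ideal.span {a} ↔ ∃ g, f - a * g ∈ J := by
  rw [sup_comm, Ideal.mem_span_singleton_sup]
  constructor
  · rintro ⟨g, b, hb, rfl⟩
    exact ⟨g, by simpa [mul_comm] using hb⟩
  · rintro ⟨g, hg⟩
    exact ⟨g, _, hg, by ring⟩

lemma isWeaklyRegular_quotient_of_colon {J J' : Ideal R} {a : R}
    (hcolon : ∀ f, a * f ∈ J ↔ f ∈ J') {rs : List R} (h' : IsWeaklyRegular (R ⧸ J') rs)
    (h : IsWeaklyRegular (R ⧸ J ⊔ Ideal.span {a}) rs) : IsWeaklyRegular (R ⧸ J) rs := by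
  have hJ' : J' = Submodule.comap (LinearMap.mulLeft R a) J := by
    ext f
    exact (hcolon f).symm
  refine isWeaklyRegular_of_exact (f := Submodule.mapQ J' J (LinearMap.mulLeft R a) hJ'.le)
    (g := Submodule.factor le_sup_left) ?_ ?_ (Submodule.factor_surjective _) h' h
  · rw [← LinearMap.ker_eq_bot, Submodule.ker_mapQ, ← hJ', Submodule.mkQ_map_self]
  · refine (Submodule.mkQ_surjective J).forall.mpr fun x ↦ ?_
    rw [Submodule.factor_mk, Submodule.mkQ_apply, Submodule.Quotient.mk_eq_zero,
      mem_sup_span_singleton_iff_exists_sub_mem]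
    constructor
    · rintro ⟨g, hg⟩
      exact ⟨J'.mkQ g, ((Submodule.Quotient.eq J).mpr hg).symm⟩
    · rintro ⟨y, hy⟩
      obtain ⟨g, rfl⟩ := J'.mkQ_surjective y
      exact ⟨g, (Submodule.Quotient.eq J).mp hy.symm⟩

/-- The third isomorphism theorem for `J ≤ J ⊔ I`, with the submodule of `R ⧸ J` in the form
in which it occurs in the definition of a weakly regular sequence. -/
def quotientSMulTopEquiv (J I : Ideal R) :
    ((R ⧸ J) ⧸ (I • ⊤ : Submodule R (R ⧸ J))) ≃ₗ[R] R ⧸ J ⊔ I :=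
  Submodule.quotEquivOfEq _ _
      (by rw [← Submodule.range_mkQ J, ← Submodule.map_top, ← Submodule.map_smul'',
        Ideal.smul_eq_mul, Ideal.mul_top]) ≪≫ₗ
    Submodule.quotientQuotientEquivQuotientSup J I

lemma isWeaklyRegular_quotient_cons_iff {J : Ideal R} {r : R} {rs : List R} :
    IsWeaklyRegular (R ⧸ J) (r :: rs) ↔
      (∀ f, r * f ∈ J → f ∈ J) ∧ IsWeaklyRegular (R ⧸ J ⊔ Ideal.span {r}) rs := by
  rw [isWeaklyRegular_cons_iff, isSMulRegular_quotient_iff_mem_of_smul_mem]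
  refine and_congr Iff.rfl (LinearEquiv.isWeaklyRegular_congr ?_ rs)
  exact Submodule.quotEquivOfEq _ _ (Submodule.ideal_span_singleton_smul r ⊤).symm ≪≫ₗ
    quotientSMulTopEquiv J (Ideal.span {r})

lemma isRegSeqOnQuot_iff {rs : List R} {J : Ideal R} :
    IsRegSeqOnQuot R rs J ↔ IsWeaklyRegular (R ⧸ J) rs ∧ J ⊔ Ideal.ofList rs ≠ ⊤ := by
  refine and_congr ?_ Iff.rfl
  rw [isWeaklyRegular_iff]
  refine forall₂_congr fun j hj ↦ ?_
  rw [(quotientSMulTopEquiv J _).isSMulRegular_congr, isSMulRegular_quotient_iff_mem_of_smul_mem]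
  rfl

lemma isWeaklyRegular_quotient_comap {T F : Type*} [CommRing T] [FunLike F R T]
    [RingHomClass F R T] {φ : F} (hφ : Function.Surjective φ) {J : Ideal T} {rs : List R} :
    IsWeaklyRegular (R ⧸ J.comap φ) rs ↔ IsWeaklyRegular (T ⧸ J) (rs.map φ) := by
  let e : R ⧸ J.comap φ ≃+* T ⧸ J := .ofBijective (Ideal.quotientMap J (φ : R →+* T) le_rfl)
    ⟨Ideal.quotientMap_injective, Ideal.quotientMap_surjective hφ⟩
  refine e.toAddEquiv.isWeaklyRegular_congr ?_
  rw [List.forall₂_map_right_iff, List.forall₂_same]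
  rintro r - x
  obtain ⟨x, rfl⟩ := Ideal.Quotient.mk_surjective x
  exact congrArg (Ideal.Quotient.mk J) (map_mul φ r x)

end WeaklyRegular

section Graded

open RingTheory.Sequence

variable {R A : Type*} [CommRing R] [SetLike A R] [AddSubgroupClass A R] (𝒜 : ℕ → A)
  [GradedRing 𝒜]

lemma mem_of_forall_mem_sup_span_pow {Q : Ideal R} (hQ : Q.IsHomogeneous 𝒜) {t : R} {e : ℕ}
    (ht : t ∈ 𝒜 e) (he : 0 < e) {f : R} (hf : ∀ m, f ∈ Q ⊔ Ideal.span {t ^ m}) : f ∈ Q := by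
  rw [hQ.mem_iff]
  intro i
  obtain ⟨g, hg⟩ := mem_sup_span_singleton_iff_exists_sub_mem.mp (hf (i + 1))
  have hlt : ¬ (i + 1) • e ≤ i := by
    rw [smul_eq_mul]
    nlinarith
  have hzero := DirectSum.coe_decompose_mul_of_left_mem_of_not_le (b := g) 𝒜
    (SetLike.pow_mem_graded (i + 1) ht) hlt
  simpa only [DirectSum.decompose_sub, DirectSum.sub_apply, AddSubgroupClass.coe_sub, hzero,
    sub_zero] using hQ i hg

lemma mem_of_mul_mem_of_quotient {Q : Ideal R} (hQ : Q.IsHomogeneous 𝒜) {t r : R} {e : ℕ}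
    (ht : t ∈ 𝒜 e) (he : 0 < e) (htQ : ∀ f, t * f ∈ Q → f ∈ Q)
    (hr : ∀ f, r * f ∈ Q ⊔ Ideal.span {t} → f ∈ Q ⊔ Ideal.span {t}) {f : R} (hf : r * f ∈ Q) :
    f ∈ Q := by
  have htpow (m : ℕ) {g : R} (hg : t ^ m * g ∈ Q) : g ∈ Q := by
    induction m with
    | zero => simpa using hg
    | succ m ih => exact ih (htQ _ (by rwa [← mul_assoc, ← pow_succ']))
  refine mem_of_forall_mem_sup_span_pow 𝒜 hQ ht he fun m ↦ ?_
  induction m with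
  | zero => simp
  | succ m ih =>
    obtain ⟨g, hg⟩ := mem_sup_span_singleton_iff_exists_sub_mem.mp ih
    have hrg : r * g ∈ Q := by
      refine htpow m ?_
      convert! Q.sub_mem hf (Q.mul_mem_left r hg) using 1
      ring
    obtain ⟨g', hg'⟩ := mem_sup_span_singleton_iff_exists_sub_mem.mp
      (hr g (Ideal.mem_sup_left hrg))
    refine mem_sup_span_singleton_iff_exists_sub_mem.mpr ⟨g', ?_⟩
    convert! Q.add_mem hg (Q.mul_mem_left (t ^ m) hg') using 1
    ring

lemma isWeaklyRegular_quotient_of_sup_span {Q : Ideal R} (hQ : Q.IsHomogeneous 𝒜) {t : R} {e : ℕ}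
    (ht : t ∈ 𝒜 e) (he : 0 < e) (htQ : ∀ f, t * f ∈ Q → f ∈ Q) {rs : List R}
    (hrs : ∀ r ∈ rs, SetLike.IsHomogeneousElem 𝒜 r)
    (h : IsWeaklyRegular (R ⧸ Q ⊔ Ideal.span {t}) rs) : IsWeaklyRegular (R ⧸ Q) rs := by
  induction rs generalizing Q with
  | nil => exact .nil R _
  | cons r rs ih =>
    rw [isWeaklyRegular_quotient_cons_iff] at h ⊢
    rw [List.forall_mem_cons] at hrs
    refine ⟨fun f ↦ mem_of_mul_mem_of_quotient 𝒜 hQ ht he htQ h.1, ?_⟩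
    have hQr : (Q ⊔ Ideal.span {r}).IsHomogeneous 𝒜 :=
      hQ.sup (Ideal.homogeneous_span 𝒜 {r} (by simpa using hrs.1))
    refine ih hQr (fun f hf ↦ ?_) hrs.2 (by rw [sup_right_comm]; exact h.2)
    obtain ⟨g, hg⟩ := mem_sup_span_singleton_iff_exists_sub_mem.mp hf
    have hrg : r * g ∈ Q ⊔ Ideal.span {t} :=
      mem_sup_span_singleton_iff_exists_sub_mem.mpr ⟨f, by simpa using Q.neg_mem hg⟩
    obtain ⟨g', hg'⟩ := mem_sup_span_singleton_iff_exists_sub_mem.mp (h.1 g hrg)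
    refine mem_sup_span_singleton_iff_exists_sub_mem.mpr ⟨g', htQ _ ?_⟩
    convert! Q.add_mem hg (Q.mul_mem_left r hg') using 1
    ring

end Graded

section Variables

open RingTheory.Sequence

variable {σ K : Type*} [CommRing K]

open Classical in
lemma span_X_image_eq_ker (Z : Set σ) :
    Ideal.span (X '' Z : Set (MvPolynomial σ K)) =
      RingHom.ker (aeval (fun s ↦ if s ∈ Z then 0 else X s) :
        MvPolynomial σ K →ₐ[K] MvPolynomial σ K) := by
  set I : Ideal (MvPolynomial σ K) := Ideal.span (X '' Z)
  set φ : MvPolynomial σ K →ₐ[K] MvPolynomial σ K := aeval fun s ↦ if s ∈ Z then 0 else X s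
  refine le_antisymm (Ideal.span_le.mpr ?_) fun f hf ↦ ?_
  · rintro _ ⟨s, hs, rfl⟩
    simp [φ, hs]
  · have hmk : (Ideal.Quotient.mkₐ K I).comp φ = Ideal.Quotient.mkₐ K I := by
      ext s
      by_cases hs : s ∈ Z
      · have hXs : (X s : MvPolynomial σ K) ∈ I := Ideal.subset_span ⟨s, hs, rfl⟩
        simp [φ, hs, Ideal.Quotient.eq_zero_iff_mem.mpr hXs]
      · simp [φ, hs]
    rw [← Ideal.Quotient.eq_zero_iff_mem, ← Ideal.Quotient.mkₐ_eq_mk K, ← hmk, AlgHom.comp_apply,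
      (RingHom.mem_ker).mp hf, map_zero]

lemma isPrime_span_X_image [IsDomain K] (Z : Set σ) :
    (Ideal.span (X '' Z : Set (MvPolynomial σ K))).IsPrime := by
  rw [span_X_image_eq_ker]
  exact RingHom.ker_isPrime _

lemma X_sub_X_notMem_span_X_image [Nontrivial K] {Z : Set σ} {y z : σ} (hyz : y ≠ z)
    (hZ : y ∈ Z → z ∉ Z) : (X y - X z : MvPolynomial σ K) ∉ Ideal.span (X '' Z) := by
  rw [span_X_image_eq_ker, RingHom.mem_ker]
  by_cases hy : y ∈ Z
  · simp [hy, hZ hy]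
  · by_cases hz : z ∈ Z
    · simp [hy, hz]
    · simpa [hy, hz, sub_eq_zero] using hyz

lemma span_X_image_sup_span_X_sub_X {Z : Set σ} {y : σ} (z : σ) (hy : y ∈ Z) :
    Ideal.span (X '' Z) ⊔ Ideal.span {(X y - X z : MvPolynomial σ K)} =
      Ideal.span (X '' insert z Z) := by
  have hyZ : (X y : MvPolynomial σ K) ∈ Ideal.span (X '' Z) := Ideal.subset_span ⟨y, hy, rfl⟩
  rw [Set.image_insert_eq, Ideal.span_insert, sup_comm (Ideal.span {X z})]
  refine le_antisymm (sup_le le_sup_left ?_) (sup_le le_sup_left ?_) <;>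
    rw [Ideal.span_singleton_le_iff_mem]
  · exact Ideal.sub_mem _ (Ideal.mem_sup_left hyZ)
      (Ideal.mem_sup_right (Ideal.mem_span_singleton_self _))
  · convert! Ideal.sub_mem _ (Ideal.mem_sup_left hyZ)
      (Ideal.mem_sup_right (Ideal.mem_span_singleton_self (X y - X z))) using 1
    ring

open Classical in
/-- The elementary automorphism `X y ↦ X y + X z` of a polynomial ring, for `z ≠ y`. -/
def addVarEquiv (y z : σ) (hzy : z ≠ y) : MvPolynomial σ K ≃ₐ[K] MvPolynomial σ K :=
  AlgEquiv.ofAlgHom (aeval (Function.update X y (X y + X z)))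
    (aeval (Function.update X y (X y - X z)))
    (by ext s; by_cases hs : s = y <;> simp [hs, hzy])
    (by ext s; by_cases hs : s = y <;> simp [hs, hzy])

lemma addVarEquiv_X_self {y z : σ} (hzy : z ≠ y) :
    addVarEquiv y z hzy (X y : MvPolynomial σ K) = X y + X z := by
  simp [addVarEquiv]

lemma addVarEquiv_X_of_ne {y z s : σ} (hzy : z ≠ y) (hs : s ≠ y) :
    addVarEquiv y z hzy (X s : MvPolynomial σ K) = X s := by
  simp [addVarEquiv, hs]

lemma comap_addVarEquiv_span_X_image {Z : Set σ} {y z : σ} (hzy : z ≠ y) (hy : y ∉ Z) :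
    (Ideal.span (X '' insert y Z)).comap (addVarEquiv y z hzy) =
      Ideal.span (X '' Z) ⊔ Ideal.span {(X y - X z : MvPolynomial σ K)} := by
  have hZ : addVarEquiv y z hzy '' (X '' Z : Set (MvPolynomial σ K)) = X '' Z := by
    rw [Set.image_image]
    refine Set.image_congr fun s hs ↦ addVarEquiv_X_of_ne hzy ?_
    rintro rfl
    exact hy hs
  have hyz : addVarEquiv y z hzy (X y - X z : MvPolynomial σ K) = X y := by
    rw [map_sub, addVarEquiv_X_self, addVarEquiv_X_of_ne hzy hzy, add_sub_cancel_right]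
  rw [← Ideal.comap_map_of_bijective _ (addVarEquiv y z hzy).bijective
    (I := Ideal.span (X '' Z) ⊔ _), Ideal.map_sup, Ideal.map_span, Ideal.map_span,
    Set.image_singleton, hZ, hyz, Set.image_insert_eq, Ideal.span_insert, sup_comm]

lemma map_addVarEquiv_X_sub_X {y z : σ} {w : σ → σ} {ys : List σ} (hzy : z ≠ y)
    (hys : ∀ y' ∈ ys, y' ≠ y ∧ w y' ≠ y) :
    (ys.map fun y' ↦ (X y' - X (w y') : MvPolynomial σ K)).map (addVarEquiv y z hzy) =
      ys.map fun y' ↦ X y' - X (w y') := by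
  rw [List.map_map]
  refine List.map_congr_left fun y' hy' ↦ ?_
  rw [Function.comp_apply, map_sub, addVarEquiv_X_of_ne hzy (hys y' hy').1,
    addVarEquiv_X_of_ne hzy (hys y' hy').2]

theorem isWeaklyRegular_X_sub_X [IsDomain K] {Z : Set σ} {w : σ → σ} {ys : List σ}
    (hys : ys.Nodup) (hw : ∀ y ∈ ys, w y ∉ ys) (hZ : ∀ y ∈ ys, y ∈ Z → w y ∉ Z)
    (hinj : Set.InjOn w {y | y ∈ ys ∧ y ∈ Z}) :
    IsWeaklyRegular (MvPolynomial σ K ⧸ Ideal.span (X '' Z : Set (MvPolynomial σ K)))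
      (ys.map fun y ↦ (X y - X (w y) : MvPolynomial σ K)) := by
  induction ys generalizing Z with
  | nil => exact .nil _ _
  | cons y ys ih =>
    rw [List.nodup_cons] at hys
    simp only [List.mem_cons, forall_eq_or_imp, not_or] at hw hZ
    have hwys (y') (hy' : y' ∈ ys) : w y' ∉ ys := (hw.2 y' hy').2
    have hne (y') (hy' : y' ∈ ys) : y' ≠ y := fun h ↦ hys.1 (h ▸ hy')
    rw [List.map_cons, isWeaklyRegular_quotient_cons_iff]
    refine ⟨fun f hf ↦ ((isPrime_span_X_image Z).mem_or_mem hf).resolve_left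
      (X_sub_X_notMem_span_X_image (Ne.symm hw.1.1) hZ.1), ?_⟩
    by_cases hy : y ∈ Z
    · rw [span_X_image_sup_span_X_sub_X _ hy]
      have hmem (y') (hy' : y' ∈ ys) (h : y' ∈ insert (w y) Z) : y' ∈ Z :=
        h.resolve_left fun h ↦ hw.1.2 (h ▸ hy')
      refine ih hys.2 hwys (fun y' hy' h ↦ ?_) (hinj.mono fun y' hy' ↦ ?_)
      · rintro (h' | h')
        · exact hne y' hy' (hinj ⟨.tail _ hy', hmem y' hy' h⟩ ⟨.head _, hy⟩ h')
        · exact hZ.2 y' hy' (hmem y' hy' h) h'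
      · exact ⟨.tail _ hy'.1, hmem y' hy'.1 hy'.2⟩
    · have hmem (y') (hy' : y' ∈ ys) (h : y' ∈ insert y Z) : y' ∈ Z :=
        h.resolve_left (hne y' hy')
      rw [← comap_addVarEquiv_span_X_image hw.1.1 hy,
        isWeaklyRegular_quotient_comap (addVarEquiv y (w y) hw.1.1).surjective,
        map_addVarEquiv_X_sub_X _ fun y' hy' ↦ ⟨hne y' hy', (hw.2 y' hy').1⟩]
      refine ih hys.2 hwys (fun y' hy' h ↦ ?_) (hinj.mono fun y' hy' ↦ ?_)
      · exact not_or.mpr ⟨(hw.2 y' hy').1, hZ.2 y' hy' (hmem y' hy' h)⟩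
      · exact ⟨.tail _ hy'.1, hmem y' hy'.1 hy'.2⟩

end Variables

section Antidiagonal

open RingTheory.Sequence

variable {σ : Type*} (K : Type*) [CommRing K] {n : ℕ} (a b : Fin n → σ)

/-- The monomial ideal generated by the products `b_c a_{c'}` with `c < c' < m` and by the
variables `a_c` with `m ≤ c`. It interpolates between the ideal of all the `a_c` (`m = 0`) and the
ideal of all antidiagonal products (`m = n`) of the matrix with rows `a` and `b`. -/
def antidiagIdeal (m : ℕ) : Ideal (MvPolynomial σ K) :=
  Ideal.span ((fun u ↦ monomial u 1) ''
    ({u | ∃ c c' : Fin n, c < c' ∧ c' < m ∧ u = .single (b c) 1 + .single (a c') 1} ∪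
      {u | ∃ c : Fin n, m ≤ c ∧ u = .single (a c) 1}))

variable {K a b}

lemma X_mul_X_mem_antidiagIdeal {m : ℕ} {c c' : Fin n} (hc : c < c') (hc' : c' < m) :
    (X (b c) * X (a c') : MvPolynomial σ K) ∈ antidiagIdeal K a b m :=
  Ideal.subset_span ⟨_, .inl ⟨c, c', hc, hc', rfl⟩, by simp [X, monomial_mul]⟩

lemma X_mem_antidiagIdeal {m : ℕ} {c : Fin n} (hc : m ≤ c) :
    (X (a c) : MvPolynomial σ K) ∈ antidiagIdeal K a b m :=
  Ideal.subset_span ⟨_, .inr ⟨c, hc, rfl⟩, rfl⟩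

lemma antidiagIdeal_le_iff {m : ℕ} {J : Ideal (MvPolynomial σ K)} :
    antidiagIdeal K a b m ≤ J ↔ (∀ c c' : Fin n, c < c' → c' < m → X (b c) * X (a c') ∈ J) ∧
      ∀ c : Fin n, m ≤ c → X (a c) ∈ J := by
  refine ⟨fun h ↦ ⟨fun c c' hc hc' ↦ h (X_mul_X_mem_antidiagIdeal hc hc'),
    fun c hc ↦ h (X_mem_antidiagIdeal hc)⟩, fun h ↦ Ideal.span_le.mpr ?_⟩
  rintro _ ⟨u, ⟨c, c', hc, hc', rfl⟩ | ⟨c, hc, rfl⟩, rfl⟩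
  · simpa [X, monomial_mul] using h.1 c c' hc hc'
  · exact h.2 c hc

lemma antidiagIdeal_zero : antidiagIdeal K a b 0 = Ideal.span (X '' (b '' ∅ ∪ a '' Set.univ)) := by
  refine le_antisymm (antidiagIdeal_le_iff.mpr ⟨fun c c' _ hc' ↦ absurd hc' c'.val.not_lt_zero,
    fun c _ ↦ Ideal.subset_span ⟨a c, .inr ⟨c, trivial, rfl⟩, rfl⟩⟩) (Ideal.span_le.mpr ?_)
  rintro _ ⟨_, ⟨_, ⟨⟩, -⟩ | ⟨c, -, rfl⟩, rfl⟩
  exact X_mem_antidiagIdeal c.val.zero_le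

lemma antidiagIdeal_self :
    antidiagIdeal K a b n = Ideal.span {f | ∃ c c' : Fin n, c < c' ∧ f = X (b c) * X (a c')} := by
  refine le_antisymm (antidiagIdeal_le_iff.mpr ⟨fun c c' hc _ ↦
    Ideal.subset_span ⟨c, c', hc, rfl⟩, fun c hc ↦ absurd c.isLt hc.not_gt⟩) (Ideal.span_le.mpr ?_)
  rintro _ ⟨c, c', hc, rfl⟩
  exact X_mul_X_mem_antidiagIdeal hc c'.isLt

lemma antidiagIdeal_succ_sup_span_X (m : Fin n) :
    antidiagIdeal K a b (m + 1) ⊔ Ideal.span {X (a m)} = antidiagIdeal K a b m := by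
  refine le_antisymm (sup_le (antidiagIdeal_le_iff.mpr ⟨fun c c' hc hc' ↦ ?_, fun c hc ↦
    X_mem_antidiagIdeal (by lia)⟩) ?_)
    (antidiagIdeal_le_iff.mpr ⟨fun c c' hc hc' ↦ ?_, fun c hc ↦ ?_⟩)
  · rcases Nat.lt_succ_iff_lt_or_eq.mp hc' with h | h
    · exact X_mul_X_mem_antidiagIdeal hc h
    · exact Ideal.mul_mem_left _ _ (X_mem_antidiagIdeal h.ge)
  · exact (Ideal.span_singleton_le_iff_mem _).mpr (X_mem_antidiagIdeal le_rfl)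
  · exact Ideal.mem_sup_left (X_mul_X_mem_antidiagIdeal hc (by lia))
  · rcases hc.lt_or_eq with h | h
    · exact Ideal.mem_sup_left (X_mem_antidiagIdeal h)
    · rw [Fin.ext h]
      exact Ideal.mem_sup_right (Ideal.mem_span_singleton_self _)

lemma X_mul_mem_antidiagIdeal_succ_iff (ha : Function.Injective a) {m : Fin n}
    (hab : ∀ c : Fin n, (c : ℕ) + 1 < m → a m ≠ b c) (f : MvPolynomial σ K) :
    X (a m) * f ∈ antidiagIdeal K a b (m + 1) ↔
      f ∈ Ideal.span (X '' (b '' Set.Iio m ∪ a '' Set.Ioi m)) := by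
  constructor
  · intro h
    rw [mem_ideal_span_X_image]
    intro u hu
    obtain ⟨v, hv, hle⟩ := mem_ideal_span_monomial_image.mp h (.single (a m) 1 + u)
      (by rwa [mem_support_iff, coeff_X_mul, ← mem_support_iff])
    rcases hv with ⟨c, c', hc, hc', rfl⟩ | ⟨c, hc, rfl⟩
    · refine ⟨b c, .inl ⟨c, Set.mem_Iio.mpr (by lia), rfl⟩, fun h0 ↦ ?_⟩
      have hbc := hle (b c)
      by_cases heq : a m = b c
      · have hcm : c' = m := by
          have := mt (hab c) (not_not.mpr heq)
          lia
        simp [hcm, heq, h0] at hbc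
      · simp [heq, h0] at hbc
    · have hne : a m ≠ a c := fun h ↦ by simp [ha h] at hc
      refine ⟨a c, .inr ⟨c, hc, rfl⟩, fun h0 ↦ ?_⟩
      have hac := hle (a c)
      simp [hne, h0] at hac
  · intro h
    have hle : Ideal.span (X '' (b '' Set.Iio m ∪ a '' Set.Ioi m)) ≤
        Submodule.comap (LinearMap.mulLeft _ (X (a m))) (antidiagIdeal K a b (m + 1)) := by
      rw [Ideal.span_le]
      rintro _ ⟨_, ⟨c, hc, rfl⟩ | ⟨c, hc, rfl⟩, rfl⟩
      · simpa [mul_comm] using X_mul_X_mem_antidiagIdeal hc m.val.lt_succ_self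
      · exact Ideal.mul_mem_left _ _ (X_mem_antidiagIdeal hc)
    exact hle h

variable {w : σ → σ} {ys : List σ}

lemma isWeaklyRegular_quotient_span_X_image_union [IsDomain K] (hww : ∀ s, w (w s) = w s)
    (hwa : Function.Injective (w ∘ a)) (hnd : ys.Nodup) (hys : ∀ y ∈ ys, w y ≠ y)
    {P Q : Set (Fin n)} (hP : ∀ p ∈ P, w (b p) = b p)
    (hPQ : ∀ p ∈ P, ∀ q ∈ Q, w (a q) ≠ w (b p)) :
    IsWeaklyRegular
      (MvPolynomial σ K ⧸ Ideal.span (X '' (b '' P ∪ a '' Q) : Set (MvPolynomial σ K)))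
      (ys.map fun y ↦ (X y - X (w y) : MvPolynomial σ K)) := by
  have hmem : ∀ y ∈ ys, y ∈ b '' P ∪ a '' Q → ∃ q ∈ Q, a q = y := by
    rintro y hy (⟨p, hp, rfl⟩ | hQ)
    · exact absurd (hP p hp) (hys _ hy)
    · exact hQ
  refine isWeaklyRegular_X_sub_X hnd (fun y _ hwy ↦ hys (w y) hwy (hww y)) ?_ ?_
  · intro y hy hyZ
    obtain ⟨q, hq, rfl⟩ := hmem y hy hyZ
    rintro (⟨p, hp, hpq⟩ | ⟨q', -, hqq'⟩)
    · exact hPQ p hp q hq (by rw [← hww, ← hpq])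
    · have hq' : q' = q := hwa (by rw [Function.comp_apply, hqq', hww, Function.comp_apply])
      exact hys _ hy (by rw [← hqq', hq'])
  · rintro y ⟨hy, hyZ⟩ y' ⟨hy', hyZ'⟩ h
    obtain ⟨q, -, rfl⟩ := hmem y hy hyZ
    obtain ⟨q', -, rfl⟩ := hmem y' hy' hyZ'
    rw [hwa h]

theorem isWeaklyRegular_quotient_antidiag [IsDomain K] (hww : ∀ s, w (w s) = w s)
    (hwa : Function.Injective (w ∘ a)) (hb : ∀ c m, c < m → w (b c) = b c)
    (hab : ∀ c m, c < m → w (a m) = w (b c) → (m : ℕ) = c + 1)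
    (hnd : ys.Nodup) (hys : ∀ y ∈ ys, w y ≠ y) :
    IsWeaklyRegular (MvPolynomial σ K ⧸
        Ideal.span {f : MvPolynomial σ K | ∃ c c', c < c' ∧ f = X (b c) * X (a c')})
      (ys.map fun y ↦ (X y - X (w y) : MvPolynomial σ K)) := by
  have haux (m : ℕ) (hm : m ≤ n) : IsWeaklyRegular (MvPolynomial σ K ⧸ antidiagIdeal K a b m)
      (ys.map fun y ↦ (X y - X (w y) : MvPolynomial σ K)) := by
    induction m with
    | zero =>
      rw [antidiagIdeal_zero]
      exact isWeaklyRegular_quotient_span_X_image_union hww hwa hnd hys (by simp) (by simp)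
    | succ m ih =>
      have hcolon := X_mul_mem_antidiagIdeal_succ_iff (K := K) (b := b) (m := ⟨m, hm⟩) hwa.of_comp
        fun c hc h ↦ by
          have := hab c ⟨m, hm⟩ (Fin.lt_def.mpr (Nat.lt_of_succ_lt hc)) (congrArg w h)
          lia
      refine isWeaklyRegular_quotient_of_colon hcolon ?_ ?_
      · refine isWeaklyRegular_quotient_span_X_image_union hww hwa hnd hys (fun c hc ↦ hb c _ hc) ?_
        intro c hc c' hc' h
        have := hab c c' (lt_trans hc hc') h
        simp only [Set.mem_Iio, Set.mem_Ioi, Fin.lt_def] at hc hc'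
        lia
      · rw [antidiagIdeal_succ_sup_span_X ⟨m, hm⟩]
        exact ih (by lia)
  rw [← antidiagIdeal_self]
  exact haux n le_rfl

end Antidiagonal

section Homogenization

open RingTheory.Sequence

lemma isWeightedHomogeneous_rename {σ τ R M : Type*} [CommSemiring R] [AddCommMonoid M]
    (e : σ → τ) {w : τ → M} {f : MvPolynomial σ R} {d : M}
    (hf : IsWeightedHomogeneous (w ∘ e) f d) : IsWeightedHomogeneous w (rename e f) d := by
  intro u hu
  obtain ⟨v, rfl, hv⟩ := coeff_rename_ne_zero e f u hu
  rw [← hf hv]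
  exact Finsupp.linearCombination_mapDomain ℕ e v

lemma optionEquivLeft_symm_C {σ R : Type*} [CommSemiring R] (f : MvPolynomial σ R) :
    (optionEquivLeft R σ).symm (Polynomial.C f) = rename some f := by
  rw [AlgEquiv.symm_apply_eq]
  induction f using MvPolynomial.induction_on <;> simp_all

lemma comap_optionEquivLeft_eq_map_symm {σ R : Type*} [CommSemiring R]
    (J : Ideal (Polynomial (MvPolynomial σ R))) :
    J.comap (optionEquivLeft R σ) = J.map (optionEquivLeft R σ).symm :=
  (Ideal.map_symm (optionEquivLeft R σ).toRingEquiv).symm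

lemma sup_span_X_eq_comap_map_constantCoeff {R : Type*} [CommRing R]
    (J : Ideal (Polynomial R)) :
    J ⊔ Ideal.span {Polynomial.X} =
      (J.map (Polynomial.constantCoeff (R := R))).comap Polynomial.constantCoeff := by
  rw [Ideal.comap_map_of_surjective' (Polynomial.constantCoeff (R := R))
    Polynomial.constantCoeff_surjective, Polynomial.ker_constantCoeff]

lemma comap_optionEquivLeft_sup_span_X_none {σ R : Type*} [CommRing R]
    (J : Ideal (Polynomial (MvPolynomial σ R))) :
    J.comap (optionEquivLeft R σ) ⊔ Ideal.span {X none} =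
      (J.map (Polynomial.constantCoeff (R := MvPolynomial σ R))).comap
        (Polynomial.constantCoeff.comp (optionEquivLeft R σ : _ →+* _)) := by
  rw [← Ideal.comap_comap, ← sup_span_X_eq_comap_map_constantCoeff]
  change _ = Ideal.comap (optionEquivLeft R σ) _
  simp only [comap_optionEquivLeft_eq_map_symm, Ideal.map_sup, Ideal.map_span,
    Set.image_singleton, optionEquivLeft_symm_X]

variable {σ K : Type*} [Field K] (lam : σ → ℕ)

/-- The weights on the variables of `S[t]`, seen as a polynomial ring in the variables
`Option σ`, for which homogenizations are homogeneous: `t` has weight `1`. -/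
def optionWeight : Option σ → ℕ := fun o ↦ o.elim 1 lam

/-- The substitution `x_s ↦ x_s t^(λ_s)`, `t ↦ t` on `S[t]`. It turns the homogenization of `g`
into `g t^d`, which identifies the homogenization of an ideal as the preimage of its extension. -/
def weightTwist : Polynomial (MvPolynomial σ K) →+* Polynomial (MvPolynomial σ K) :=
  Polynomial.eval₂RingHom
    (eval₂Hom (Polynomial.C.comp C) fun s ↦ Polynomial.C (X s) * Polynomial.X ^ lam s)
    Polynomial.X

lemma weightTwist_X : weightTwist lam Polynomial.X =
    (Polynomial.X : Polynomial (MvPolynomial σ K)) :=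
  Polynomial.eval₂_X _ _

variable [Fintype σ]

lemma wdegS_eq_weight (u : σ →₀ ℕ) : wdegS σ lam u = Finsupp.weight lam u := by
  simp [wdegS, Finsupp.weight_apply, Finsupp.sum_fintype, mul_comm]

/-- Homogenization to degree `d`: the linear map sending a monomial `x^u` to
`x^u t^(d - λ·u)`. The exponent is a truncated difference, so the name is only appropriate on
polynomials of `λ`-degree at most `d`. -/
def homogTo (d : ℕ) : MvPolynomial σ K →ₗ[K] Polynomial (MvPolynomial σ K) :=
  (basisMonomials σ K).constr K fun u ↦
    Polynomial.C (monomial u 1) * Polynomial.X ^ (d - wdegS σ lam u)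

lemma homogTo_monomial (d : ℕ) (u : σ →₀ ℕ) (c : K) :
    homogTo lam d (monomial u c) =
      Polynomial.C (monomial u c) * Polynomial.X ^ (d - wdegS σ lam u) := by
  have h : homogTo lam d (monomial u (1 : K)) =
      Polynomial.C (monomial u 1) * Polynomial.X ^ (d - wdegS σ lam u) :=
    (basisMonomials σ K).constr_basis K _ u
  rw [← mul_one c, ← smul_eq_mul, ← smul_monomial, map_smul, h, ← smul_mul_assoc,
    Polynomial.smul_C]

lemma homogTo_eq_sum (d : ℕ) (g : MvPolynomial σ K) :
    homogTo lam d g = ∑ u ∈ g.support,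
      Polynomial.C (monomial u (coeff u g)) * Polynomial.X ^ (d - wdegS σ lam u) := by
  conv_lhs => rw [g.as_sum]
  simp only [map_sum, homogTo_monomial]

lemma homogTo_eq_X_pow_mul_homogPoly {d : ℕ} {g : MvPolynomial σ K}
    (hg : ∀ u ∈ g.support, wdegS σ lam u ≤ d) :
    homogTo lam d g = Polynomial.X ^ (d - g.support.sup (wdegS σ lam)) * homogPoly σ K lam g := by
  rw [homogTo_eq_sum, homogPoly, Finset.mul_sum]
  refine Finset.sum_congr rfl fun u hu ↦ ?_
  have hsup : wdegS σ lam u ≤ g.support.sup (wdegS σ lam) := Finset.le_sup hu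
  have hd := Finset.sup_le hg
  rw [mul_left_comm, ← pow_add]
  congr 2
  lia

lemma homogPoly_coeff_zero (g : MvPolynomial σ K) :
    (homogPoly σ K lam g).coeff 0 = initFormS σ K lam g := by
  rw [homogPoly, initFormS, Polynomial.finsetSum_coeff, Finset.sum_filter]
  refine Finset.sum_congr rfl fun u hu ↦ ?_
  have hsup : wdegS σ lam u ≤ g.support.sup (wdegS σ lam) := Finset.le_sup hu
  rw [Polynomial.coeff_C_mul_X_pow]
  exact if_congr (by lia) rfl rfl

lemma map_constantCoeff_homogIdeal (I : Ideal (MvPolynomial σ K)) :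
    (homogIdeal σ K lam I).map Polynomial.constantCoeff = initIdealS σ K lam I := by
  rw [homogIdeal, Ideal.map_span, initIdealS]
  refine le_antisymm (Ideal.span_le.mpr ?_) (Ideal.span_mono ?_)
  · rintro _ ⟨_, ⟨g, hg, rfl⟩, rfl⟩
    rw [Polynomial.constantCoeff_apply, homogPoly_coeff_zero]
    rcases eq_or_ne g 0 with rfl | hg0
    · simp [initFormS]
    · exact Ideal.subset_span ⟨g, hg, hg0, rfl⟩
  · rintro _ ⟨g, hg, -, rfl⟩
    exact ⟨_, ⟨g, hg, rfl⟩, homogPoly_coeff_zero lam g⟩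

lemma weightTwist_C_monomial (u : σ →₀ ℕ) (c : K) :
    weightTwist lam (Polynomial.C (monomial u c)) =
      Polynomial.C (monomial u c) * Polynomial.X ^ wdegS σ lam u := by
  rw [weightTwist, Polynomial.coe_eval₂RingHom, Polynomial.eval₂_C, coe_eval₂Hom, eval₂_monomial,
    monomial_eq]
  simp [Finsupp.prod_fintype, wdegS, mul_pow, ← pow_mul, Finset.prod_mul_distrib,
    Finset.prod_pow_eq_pow_sum, mul_assoc]

lemma weightTwist_monomial (j : ℕ) (u : σ →₀ ℕ) (c : K) :
    weightTwist lam (Polynomial.monomial j (monomial u c)) =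
      Polynomial.monomial (wdegS σ lam u + j) (monomial u c) := by
  rw [← Polynomial.C_mul_X_pow_eq_monomial, map_mul, map_pow, weightTwist_X,
    weightTwist_C_monomial, mul_assoc, ← pow_add, Polynomial.C_mul_X_pow_eq_monomial]

lemma weightTwist_homogPoly (g : MvPolynomial σ K) :
    weightTwist lam (homogPoly σ K lam g) =
      Polynomial.C g * Polynomial.X ^ g.support.sup (wdegS σ lam) := by
  conv_rhs => rw [g.as_sum, map_sum, Finset.sum_mul, ← g.as_sum]
  rw [homogPoly, map_sum]
  refine Finset.sum_congr rfl fun u hu ↦ ?_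
  rw [Polynomial.C_mul_X_pow_eq_monomial, weightTwist_monomial,
    Nat.add_sub_of_le (Finset.le_sup hu), Polynomial.C_mul_X_pow_eq_monomial]

lemma coeff_weightTwist_eq_zero (F : Polynomial (MvPolynomial σ K)) {d : ℕ} {u : σ →₀ ℕ}
    (hd : d < wdegS σ lam u) : coeff u ((weightTwist lam F).coeff d) = 0 := by
  classical
  induction F using Polynomial.induction_on' with
  | add F G hF hG => simp [hF, hG]
  | monomial j f =>
    induction f using MvPolynomial.induction_on' with
    | add f g hf hg => simp [hf, hg]
    | monomial v c =>
      rw [weightTwist_monomial, Polynomial.coeff_monomial]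
      split_ifs with hj
      · rw [coeff_monomial, if_neg]
        rintro rfl
        lia
      · exact coeff_zero u

lemma sum_homogTo_coeff_weightTwist (F : Polynomial (MvPolynomial σ K)) :
    ((weightTwist lam F).sum fun d g ↦ homogTo lam d g) = F := by
  have hadd (F G : Polynomial (MvPolynomial σ K)) : ((F + G).sum fun d g ↦ homogTo lam d g) =
      (F.sum fun d g ↦ homogTo lam d g) + G.sum fun d g ↦ homogTo lam d g :=
    Polynomial.sum_add_index F G _ (fun d ↦ (homogTo lam d).map_zero)
      fun d ↦ (homogTo lam d).map_add
  induction F using Polynomial.induction_on' with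
  | add F G hF hG => rw [map_add, hadd, hF, hG]
  | monomial j f =>
    induction f using MvPolynomial.induction_on' with
    | add f g hf hg => rw [map_add, map_add, hadd, hf, hg]
    | monomial v c =>
      rw [weightTwist_monomial, Polynomial.sum_monomial_index _ _ (homogTo lam _).map_zero,
        homogTo_monomial, Nat.add_sub_cancel_left, Polynomial.C_mul_X_pow_eq_monomial]

lemma mem_homogIdeal_iff {I : Ideal (MvPolynomial σ K)} {F : Polynomial (MvPolynomial σ K)} :
    F ∈ homogIdeal σ K lam I ↔ ∀ d, (weightTwist lam F).coeff d ∈ I := by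
  rw [← Ideal.mem_map_C_iff]
  constructor
  · have hle : homogIdeal σ K lam I ≤ (I.map Polynomial.C).comap (weightTwist lam) := by
      rw [homogIdeal, Ideal.span_le]
      rintro _ ⟨g, hg, rfl⟩
      rw [SetLike.mem_coe, Ideal.mem_comap, weightTwist_homogPoly]
      exact Ideal.mul_mem_right _ _ (Ideal.mem_map_of_mem _ hg)
    exact fun hF ↦ hle hF
  · intro hF
    rw [Ideal.mem_map_C_iff] at hF
    rw [← sum_homogTo_coeff_weightTwist lam F, Polynomial.sum_def]
    refine Ideal.sum_mem _ fun d _ ↦ ?_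
    have hdeg : ∀ u ∈ ((weightTwist lam F).coeff d).support, wdegS σ lam u ≤ d := fun u hu ↦
      not_lt.mp fun hd ↦ mem_support_iff.mp hu (coeff_weightTwist_eq_zero lam F hd)
    rw [homogTo_eq_X_pow_mul_homogPoly lam hdeg]
    exact Ideal.mul_mem_left _ _ (Ideal.subset_span ⟨_, hF d, rfl⟩)

lemma mem_homogIdeal_of_X_mul_mem {I : Ideal (MvPolynomial σ K)}
    {F : Polynomial (MvPolynomial σ K)} (hF : Polynomial.X * F ∈ homogIdeal σ K lam I) :
    F ∈ homogIdeal σ K lam I := by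
  rw [mem_homogIdeal_iff] at hF ⊢
  intro d
  simpa only [map_mul, weightTwist_X, Polynomial.coeff_X_mul] using hF (d + 1)

lemma isWeightedHomogeneous_homogPoly (g : MvPolynomial σ K) :
    IsWeightedHomogeneous (optionWeight lam)
      ((optionEquivLeft K σ).symm (homogPoly σ K lam g)) (g.support.sup (wdegS σ lam)) := by
  rw [homogPoly, map_sum]
  refine IsWeightedHomogeneous.sum _ _ _ fun u hu ↦ ?_
  have hX : IsWeightedHomogeneous (optionWeight lam) (X none : MvPolynomial (Option σ) K) 1 :=
    isWeightedHomogeneous_X K _ none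
  have hu' : IsWeightedHomogeneous (optionWeight lam)
      (rename some (monomial u (coeff u g))) (wdegS σ lam u) :=
    isWeightedHomogeneous_rename some
      (isWeightedHomogeneous_monomial lam u _ (wdegS_eq_weight lam u).symm)
  rw [map_mul, map_pow, optionEquivLeft_symm_C, optionEquivLeft_symm_X]
  convert! hu'.mul (hX.pow _)
  rw [smul_eq_mul, mul_one, Nat.add_sub_of_le (Finset.le_sup hu)]

attribute [local instance] weightedGradedAlgebra

lemma isHomogeneous_comap_optionEquivLeft_homogIdeal (I : Ideal (MvPolynomial σ K)) :
    ((homogIdeal σ K lam I).comap (optionEquivLeft K σ)).IsHomogeneous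
      (weightedHomogeneousSubmodule K (optionWeight lam)) := by
  rw [comap_optionEquivLeft_eq_map_symm, homogIdeal, Ideal.map_span]
  refine Ideal.homogeneous_span _ _ ?_
  rintro _ ⟨_, ⟨g, -, rfl⟩, rfl⟩
  exact ⟨_, isWeightedHomogeneous_homogPoly lam g⟩

theorem isWeaklyRegular_quotient_homogIdeal {I : Ideal (MvPolynomial σ K)}
    {fs : List (MvPolynomial σ K)} (hfs : ∀ f ∈ fs, ∃ d, IsWeightedHomogeneous lam f d)
    (h : IsWeaklyRegular (MvPolynomial σ K ⧸ initIdealS σ K lam I) fs) :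
    IsWeaklyRegular (Polynomial (MvPolynomial σ K) ⧸ homogIdeal σ K lam I)
      (fs.map Polynomial.C) := by
  have hmap : fs.map Polynomial.C = (fs.map (rename some)).map (optionEquivLeft K σ) := by
    simp only [List.map_map, List.map_inj_left, Function.comp_apply, ← optionEquivLeft_symm_C,
      AlgEquiv.apply_symm_apply, implies_true]
  rw [hmap, ← isWeaklyRegular_quotient_comap (optionEquivLeft K σ).surjective]
  refine isWeaklyRegular_quotient_of_sup_span _
    (isHomogeneous_comap_optionEquivLeft_homogIdeal lam I) (isWeightedHomogeneous_X K _ none)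
    one_pos (fun f hf ↦ mem_homogIdeal_of_X_mul_mem lam ?_) ?_ ?_
  · simpa [Ideal.mem_comap] using hf
  · simp only [List.forall_mem_map]
    exact fun f hf ↦ (hfs f hf).imp fun d ↦ isWeightedHomogeneous_rename some
  · rw [comap_optionEquivLeft_sup_span_X_none, map_constantCoeff_homogIdeal,
      isWeaklyRegular_quotient_comap]
    · simpa [Function.comp_def, ← optionEquivLeft_symm_C] using h
    · exact Polynomial.constantCoeff_surjective.comp (optionEquivLeft K σ).surjective

theorem isRegSeqOnQuot_homogIdeal {I : Ideal (MvPolynomial σ K)}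
    {fs : List (MvPolynomial σ K)} (hfs : ∀ f ∈ fs, ∃ d, IsWeightedHomogeneous lam f d)
    (h : IsRegSeqOnQuot (MvPolynomial σ K) fs (initIdealS σ K lam I)) :
    IsRegSeqOnQuot (Polynomial (MvPolynomial σ K)) (fs.map Polynomial.C)
      (homogIdeal σ K lam I) := by
  rw [isRegSeqOnQuot_iff] at h ⊢
  refine ⟨isWeaklyRegular_quotient_homogIdeal lam hfs h.1, ?_⟩
  have hmap : (homogIdeal σ K lam I ⊔ Ideal.ofList (fs.map Polynomial.C)).map
      Polynomial.constantCoeff = initIdealS σ K lam I ⊔ Ideal.ofList fs := by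
    rw [Ideal.map_sup, map_constantCoeff_homogIdeal, Ideal.map_ofList, List.map_map]
    congr
    simp [Function.comp_def]
  intro htop
  exact h.2 (by rw [← hmap, htop, Ideal.map_top])

end Homogenization

section BlockMatrix

variable {n k : ℕ} {i : ℕ → ℕ}

/-- Column `c` of the matrix is the `t`-th column of its block `r`, where both are counted from
zero and the blocks are the intervals `[i r, i (r + 1))` of values of `c + 1`. -/
def IsColumn (i : ℕ → ℕ) (k c r t : ℕ) : Prop :=
  r < k ∧ i r + t < i (r + 1) ∧ c + 1 = i r + t

lemma exists_isColumn {c : ℕ} (h₀ : i 0 ≤ c + 1) (hk : c + 1 < i k) :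
    ∃ r t, IsColumn i k c r t := by
  induction k with
  | zero => lia
  | succ k ih =>
    rcases lt_or_ge (c + 1) (i k) with h | h
    · obtain ⟨r, t, hr, ht⟩ := ih h
      exact ⟨r, t, hr.trans k.lt_succ_self, ht⟩
    · exact ⟨k, c + 1 - i k, k.lt_succ_self, by lia, by lia⟩

lemma block_le_block (hi : MonotoneOn i (Set.Iic k)) {q q' r r' : ℕ} (hr : r ≤ k)
    (hq : i r ≤ q) (hqq' : q ≤ q') (hq' : q' < i (r' + 1)) : r ≤ r' := by
  by_contra! h
  have := hi ((Nat.succ_le_of_lt h).trans hr) hr h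
  lia

lemma IsColumn.eq_of_sub_eq (hi : MonotoneOn i (Set.Iic k)) {c c' r r' t t' : ℕ}
    (h : IsColumn i k c r t) (h' : IsColumn i k c' r' t')
    (heq : i (r + 1) - t = i (r' + 1) - t') : c = c' := by
  obtain ⟨hr, ht, hc⟩ := h
  obtain ⟨hr', ht', hc'⟩ := h'
  obtain rfl : r = r' := le_antisymm
    (block_le_block hi hr.le (q := i (r + 1) - t - 1) (q' := i (r' + 1) - t' - 1)
      (by lia) (by lia) (by lia))
    (block_le_block hi hr'.le (q := i (r' + 1) - t' - 1) (q' := i (r + 1) - t - 1)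
      (by lia) (by lia) (by lia))
  lia

lemma IsColumn.eq_succ_of_sub_eq (hi : MonotoneOn i (Set.Iic k)) {c c' r r' t t' : ℕ}
    (h : IsColumn i k c r t) (h' : IsColumn i k c' r' t') (hlt : c < c')
    (heq : i (r' + 1) - t' = i (r + 1) - 1 - t) : c' = c + 1 := by
  obtain ⟨hr, ht, hc⟩ := h
  obtain ⟨hr', ht', hc'⟩ := h'
  obtain rfl : r = r' := le_antisymm
    (block_le_block hi hr.le (q := c + 1) (q' := c' + 1) (by lia) (by lia) (by lia))
    (block_le_block hi hr'.le (q := i (r' + 1) - t' - 1) (q' := i (r + 1) - 1 - t)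
      (by lia) (by lia) (by lia))
  lia

variable (n k i)

/-- The variable in the first row of the `t`-th column of block `r`. -/
def topVar (r t : ℕ) : SVar n k :=
  if t = 0 then if r = 0 then s2S n k else vvS n k (r - 1) else xvS n k (i (r + 1) - t)

/-- The variable in the second row of the `t`-th column of block `r`. -/
def bottomVar (r t : ℕ) : SVar n k :=
  if r = k - 1 ∧ t = i k - i (k - 1) - 1 then s1S n k else xvS n k (i (r + 1) - 1 - t)

/-- The variables `x_{v_0}, …, x_{v_{k-2}}, x_{s_1}, x_{s_2}` of `S` that do not belong
to `R_{n+1}`. -/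
def auxVars : List (SVar n k) := (List.range (k - 1)).map (vvS n k) ++ [s1S n k, s2S n k]

/-- The specialization of the variables of `S` to those of `R_{n+1}` along the sequence `𝒜`:
`x_{v_j} ↦ x_{i_{j+2}}`, `x_{s_1} ↦ x_{i_{k-1}}` and `x_{s_2} ↦ x_{i_1}`. -/
def specialize : SVar n k → SVar n k :=
  Sum.elim Sum.inl
    (Sum.elim (fun j ↦ xvS n k (i (j + 2))) ![xvS n k (i (k - 1)), xvS n k (i 1)])

variable {n k i}

lemma xvS_injOn : Set.InjOn (xvS n k) (Set.Icc 1 (n + 1)) := by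
  rintro p ⟨hp, hpn⟩ q ⟨hq, hqn⟩ h
  have hpq := congrArg Fin.val (Sum.inl_injective h)
  rw [Fin.val_mk, Fin.val_mk, Nat.mod_eq_of_lt (by lia), Nat.mod_eq_of_lt (by lia)] at hpq
  lia

lemma specialize_vvS {j : ℕ} (hj : j < k - 1) :
    specialize n k i (vvS n k j) = xvS n k (i (j + 2)) := by
  rw [vvS, dif_pos hj]
  rfl

lemma specialize_specialize (s : SVar n k) :
    specialize n k i (specialize n k i s) = specialize n k i s := by
  rcases s with s | j | l
  · rfl
  · rfl
  · fin_cases l <;> rfl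

lemma specialize_topVar {c r t : ℕ} (h : IsColumn i k c r t) :
    specialize n k i (topVar n k i r t) = xvS n k (i (r + 1) - t) := by
  rw [topVar]
  split_ifs with ht hr
  · rw [ht, hr]
    rfl
  · rw [specialize_vvS (by have := h.1; lia), ht, Nat.sub_zero]
    congr 2
    lia
  · rfl

lemma specialize_bottomVar {c r t : ℕ} (h : IsColumn i k c r t) :
    specialize n k i (bottomVar n k i r t) = xvS n k (i (r + 1) - 1 - t) := by
  obtain ⟨hr, ht, -⟩ := h
  rw [bottomVar]
  split_ifs with hlast
  · obtain rfl : k = r + 1 := by lia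
    change xvS n (r + 1) (i r) = _
    congr 1
    lia
  · rfl

lemma specialize_bottomVar_eq_self {c r t : ℕ} (h : IsColumn i k c r t) (hc : c + 2 < i k) :
    specialize n k i (bottomVar n k i r t) = bottomVar n k i r t := by
  obtain ⟨hr, -, hct⟩ := h
  rw [bottomVar, if_neg]
  · rfl
  · rintro ⟨hlast, hend⟩
    obtain rfl : k = r + 1 := by lia
    simp only [Nat.add_sub_cancel] at hend
    lia

lemma mem_auxVars {y : SVar n k} :
    y ∈ auxVars n k ↔ (∃ j < k - 1, y = vvS n k j) ∨ y = s1S n k ∨ y = s2S n k := by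
  simp [auxVars, eq_comm]

lemma nodup_auxVars : (auxVars n k).Nodup := by
  rw [auxVars, List.nodup_append]
  refine ⟨List.Nodup.map_on (fun j hj j' hj' h ↦ ?_) List.nodup_range, ?_, ?_⟩
  · rw [List.mem_range] at hj hj'
    simpa [vvS, hj, hj'] using h
  · simp [s1S, s2S]
  · intro y hy z hz
    obtain ⟨j, hj, rfl⟩ := List.mem_map.mp hy
    rw [vvS, dif_pos (List.mem_range.mp hj)]
    rcases List.mem_pair.mp hz with rfl | rfl <;> simp [s1S, s2S]

lemma specialize_ne_of_mem_auxVars {y : SVar n k} (hy : y ∈ auxVars n k) :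
    specialize n k i y ≠ y := by
  rcases mem_auxVars.mp hy with ⟨j, hj, rfl⟩ | rfl | rfl
  · rw [specialize_vvS hj, vvS, dif_pos hj]
    exact Sum.inl_ne_inr
  · exact Sum.inl_ne_inr
  · exact Sum.inl_ne_inr

theorem isRegSeqOnQuot_auxVars {K : Type*} [CommRing K] [IsDomain K]
    (hi : MonotoneOn i (Set.Iic k)) (hi₀ : i 0 = 1) (hik : i k = n + 1) {r t : Fin n → ℕ}
    (hcol : ∀ c : Fin n, IsColumn i k c (r c) (t c)) :
    IsRegSeqOnQuot (MvPolynomial (SVar n k) K)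
      ((auxVars n k).map fun y ↦ X y - X (specialize n k i y))
      (Ideal.span {f | ∃ c c', c < c' ∧
        f = X (bottomVar n k i (r c) (t c)) * X (topVar n k i (r c') (t c'))}) := by
  have hone (r : ℕ) (hr : r < k) : 1 ≤ i r := hi₀ ▸ hi (Nat.zero_le k) hr.le r.zero_le
  have hle (r : ℕ) (hr : r < k) : i (r + 1) ≤ n + 1 :=
    hik ▸ hi (Set.mem_Iic.mpr hr) Set.self_mem_Iic hr
  have htop (c : Fin n) : i (r c + 1) - t c ∈ Set.Icc 1 (n + 1) := by
    obtain ⟨hr, ht, -⟩ := hcol c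
    have := hle _ hr
    exact ⟨by lia, by lia⟩
  have hbot (c : Fin n) : i (r c + 1) - 1 - t c ∈ Set.Icc 1 (n + 1) := by
    obtain ⟨hr, ht, -⟩ := hcol c
    have := hone _ hr
    have := hle _ hr
    exact ⟨by lia, by lia⟩
  rw [isRegSeqOnQuot_iff]
  constructor
  · refine isWeaklyRegular_quotient_antidiag specialize_specialize ?_ ?_ ?_ nodup_auxVars
      fun y ↦ specialize_ne_of_mem_auxVars
    · intro c c' h
      simp only [Function.comp_apply, specialize_topVar (hcol _)] at h
      exact Fin.ext ((hcol c).eq_of_sub_eq hi (hcol c') (xvS_injOn (htop c) (htop c') h))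
    · intro c c' hlt
      exact specialize_bottomVar_eq_self (hcol c) (by lia)
    · intro c c' hlt h
      rw [specialize_topVar (hcol c'), specialize_bottomVar (hcol c)] at h
      exact (hcol c).eq_succ_of_sub_eq hi (hcol c') hlt (xvS_injOn (htop c') (hbot c) h)
  · refine ne_top_of_le_ne_top (RingHom.ker_ne_top (constantCoeff (R := K) (σ := SVar n k)))
      (sup_le (Ideal.span_le.mpr ?_) (Ideal.span_le.mpr ?_))
    · rintro _ ⟨c, c', -, rfl⟩
      simp [RingHom.mem_ker]
    · intro f hf
      obtain ⟨y, -, rfl⟩ := List.mem_map.mp hf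
      simp [RingHom.mem_ker]

lemma weight_specialize {lam : SVar n k → ℕ}
    (hv : ∀ j < k - 1, lam (vvS n k j) = lam (xvS n k (i (j + 2))))
    (hs₁ : lam (s1S n k) = lam (xvS n k (i (k - 1))))
    (hs₂ : lam (s2S n k) = lam (xvS n k (i 1))) {y : SVar n k} (hy : y ∈ auxVars n k) :
    lam (specialize n k i y) = lam y := by
  rcases mem_auxVars.mp hy with ⟨j, hj, rfl⟩ | rfl | rfl
  · rw [specialize_vvS hj, hv j hj]
  · exact hs₁.symm
  · exact hs₂.symm

lemma map_X_sub_X_auxVars {R : Type*} [CommRing R] :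
    ((auxVars n k).map fun y ↦ (X y - X (specialize n k i y) : MvPolynomial (SVar n k) R)) =
      ((List.range (k - 1)).map fun j ↦ X (vvS n k j) - X (xvS n k (i (j + 2)))) ++
        [X (s1S n k) - X (xvS n k (i (k - 1))), X (s2S n k) - X (xvS n k (i 1))] := by
  rw [auxVars, List.map_append, List.map_map]
  congr 1
  refine List.map_congr_left fun j hj ↦ ?_
  rw [Function.comp_apply, specialize_vvS (List.mem_range.mp hj)]

end BlockMatrix

theorem statement_14_general (K : Type*) [Field K] (n k : ℕ)
    (i : ℕ → ℕ) (hi0 : i 0 = 1) (hik : i k = n + 1) (himono : ∀ r < k, i r < i (r + 1))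
    (A : Matrix (Fin 2) (Fin n) (MvPolynomial (SVar n k) K))
    (hA1 : ∀ r t : ℕ, r < k → t < i (r + 1) - i r → ∀ c : Fin n, (c : ℕ) = i r - 1 + t →
      A 1 c = if r = k - 1 ∧ t = i k - i (k - 1) - 1 then X (s1S n k)
              else X (xvS n k (i (r + 1) - 1 - t)))
    (hA0 : ∀ r t : ℕ, r < k → t < i (r + 1) - i r → ∀ c : Fin n, (c : ℕ) = i r - 1 + t →
      A 0 c = if t = 0 then (if r = 0 then X (s2S n k) else X (vvS n k (r - 1)))
              else X (xvS n k (i (r + 1) - t)))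
    (I Mpark : Ideal (MvPolynomial (SVar n k) K))
    (hMpark : Mpark = Ideal.span { f | ∃ c₁ c₂ : Fin n, c₁ < c₂ ∧ f = A 1 c₁ * A 0 c₂ })
    (As : List (MvPolynomial (SVar n k) K))
    (hAs : As = ((List.range (k - 1)).map fun j => X (vvS n k j) - X (xvS n k (i (j + 2))))
      ++ [X (s1S n k) - X (xvS n k (i (k - 1))), X (s2S n k) - X (xvS n k (i 1))])
    (lam : SVar n k → ℕ)
    (hlamv : ∀ j : ℕ, j < k - 1 → lam (vvS n k j) = lam (xvS n k (i (j + 2))))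
    (hlams1 : lam (s1S n k) = lam (xvS n k (i (k - 1))))
    (hlams2 : lam (s2S n k) = lam (xvS n k (i 1)))
    (hinit : initIdealS (SVar n k) K lam I = Mpark) :
    IsRegSeqOnQuot (Polynomial (MvPolynomial (SVar n k) K))
      (As.map (fun a => Polynomial.C a))
      (homogIdeal (SVar n k) K lam I) := by
  have hi : MonotoneOn i (Set.Iic k) := (strictMonoOn_Iic_of_lt_succ himono).monotoneOn
  choose r t hcol using fun c : Fin n ↦
    exists_isColumn (k := k) (i := i) (c := c) (by lia) (by lia)
  have hone (r : ℕ) (hr : r < k) : 1 ≤ i r := hi0 ▸ hi (Nat.zero_le k) hr.le r.zero_le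
  have hA1' (c : Fin n) : A 1 c = X (bottomVar n k i (r c) (t c)) := by
    obtain ⟨hr, ht, hc⟩ := hcol c
    have := hone _ hr
    rw [hA1 _ (t c) hr (by lia) c (by lia), bottomVar, apply_ite X]
  have hA0' (c : Fin n) : A 0 c = X (topVar n k i (r c) (t c)) := by
    obtain ⟨hr, ht, hc⟩ := hcol c
    have := hone _ hr
    rw [hA0 _ (t c) hr (by lia) c (by lia), topVar, apply_ite X, apply_ite X]
  rw [hAs, ← map_X_sub_X_auxVars]
  refine isRegSeqOnQuot_homogIdeal lam ?_ ?_
  · simp only [List.mem_map]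
    rintro _ ⟨y, hy, rfl⟩
    refine ⟨lam y, (isWeightedHomogeneous_X K lam y).sub ?_⟩
    exact weight_specialize hlamv hlams1 hlams2 hy ▸ isWeightedHomogeneous_X K lam _
  · simpa only [hinit, hMpark, hA0', hA1'] using isRegSeqOnQuot_auxVars hi hi0 hik hcol

/-- If `λ̃` is a weight vector on the variables of `S` making every
element of `𝒜` homogeneous and satisfying `in_{λ̃}(I_{Π,M}) = M_{Π,M}`, then `𝒜` is a
regular sequence on `S[t]/I_{Π,M,t}`, where `I_{Π,M,t}` is the `λ̃`-homogenization of
`I_{Π,M}`. -/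
theorem statement_14 (K : Type*) [Field K] (n k : ℕ) (hn : 2 ≤ n) (hk : 2 ≤ k)
    (i : ℕ → ℕ) (hi0 : i 0 = 1) (hik : i k = n + 1) (himono : ∀ r < k, i r < i (r + 1))
    (A : Matrix (Fin 2) (Fin n) (MvPolynomial (SVar n k) K))
    (hA1 : ∀ r t : ℕ, r < k → t < i (r + 1) - i r → ∀ c : Fin n, (c : ℕ) = i r - 1 + t →
      A 1 c = if r = k - 1 ∧ t = i k - i (k - 1) - 1 then X (s1S n k)
              else X (xvS n k (i (r + 1) - 1 - t)))
    (hA0 : ∀ r t : ℕ, r < k → t < i (r + 1) - i r → ∀ c : Fin n, (c : ℕ) = i r - 1 + t →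
      A 0 c = if t = 0 then (if r = 0 then X (s2S n k) else X (vvS n k (r - 1)))
              else X (xvS n k (i (r + 1) - t)))
    (Itop Mpark : Ideal (MvPolynomial (SVar n k) K))
    (hItop : Itop = Ideal.span { f | ∃ c₁ c₂ : Fin n, c₁ < c₂ ∧
      f = A 0 c₁ * A 1 c₂ - A 0 c₂ * A 1 c₁ })
    (hMpark : Mpark = Ideal.span { f | ∃ c₁ c₂ : Fin n, c₁ < c₂ ∧ f = A 1 c₁ * A 0 c₂ })
    (As : List (MvPolynomial (SVar n k) K))
    (hAs : As = ((List.range (k - 1)).map fun j => X (vvS n k j) - X (xvS n k (i (j + 2))))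
      ++ [X (s1S n k) - X (xvS n k (i (k - 1))), X (s2S n k) - X (xvS n k (i 1))])
    (lam : SVar n k → ℕ)
    (hlamv : ∀ j : ℕ, j < k - 1 → lam (vvS n k j) = lam (xvS n k (i (j + 2))))
    (hlams1 : lam (s1S n k) = lam (xvS n k (i (k - 1))))
    (hlams2 : lam (s2S n k) = lam (xvS n k (i 1)))
    (hinit : initIdealS (SVar n k) K lam Itop = Mpark) :
    IsRegSeqOnQuot (Polynomial (MvPolynomial (SVar n k) K))
      (As.map (fun a => Polynomial.C a))
      (homogIdeal (SVar n k) K lam Itop) :=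
  statement_14_general K n k i hi0 hik himono A hA1 hA0 Itop Mpark hMpark As hAs lam hlamv hlams1
    hlams2 hinit
end
end

section
/- Let ψ : S → R_{n+1} be the K-algebra homomorphism determined by ψ(x_i) = x_i for 1 ≤ i ≤ n+1, ψ(x_{v_j}) = x_{i_{j+2}} for 0 ≤ j ≤ k−2, ψ(x_{s_1}) = x_{i_{k−1}}, and ψ(x_{s_2}) = x_{i_1}. Then ψ(I_{Π,M} + ⟨𝒜⟩) = P_n; consequently ψ induces a K-algebra isomorphism S/(I_{Π,M} + ⟨𝒜⟩) ≅ R_{n+1}/P_n (equivalently, S/I_{Π,M} ⊗_S S/⟨𝒜⟩ ≅ R_{n+1}/P_n as R_{n+1}-modules). -/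
noncomputable section

open MvPolynomial

/-- The index in `Fin (n+1)` of the paper's variable `x_m` of `R_{n+1}`, `1 ≤ m ≤ n + 1`. -/
def xIdx (n : ℕ) (m : ℕ) : Fin (n + 1) := ⟨(m - 1) % (n + 1), Nat.mod_lt _ (Nat.succ_pos n)⟩

/-- The defining ideal `P_n ⊆ K[x_1,…,x_{n+1}]` of the rational normal curve of degree `n`. -/
def Pideal (n : ℕ) (K : Type*) [Field K] : Ideal (MvPolynomial (Fin (n + 1)) K) :=
  Ideal.span { f | ∃ i j : ℕ, 2 ≤ i ∧ i ≤ j ∧ j ≤ n ∧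
    f = X (xIdx n i) * X (xIdx n j) - X (xIdx n (i - 1)) * X (xIdx n (j + 1)) }

/-- The `K`-algebra homomorphism `ψ : S → R_{n+1}` with `ψ(x_m) = x_m`,
`ψ(x_{v_j}) = x_{i_{j+2}}`, `ψ(x_{s_1}) = x_{i_{k-1}}`, `ψ(x_{s_2}) = x_{i_1}`. -/
def psiMap (n k : ℕ) (K : Type*) [Field K] (i : ℕ → ℕ) :
    MvPolynomial (SVar n k) K →ₐ[K] MvPolynomial (Fin (n + 1)) K :=
  aeval (Sum.elim (fun j : Fin (n + 1) => X j)
    (Sum.elim (fun j : Fin (k - 1) => X (xIdx n (i ((j : ℕ) + 2))))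
      (fun t : Fin 2 => if t = 0 then X (xIdx n (i (k - 1))) else X (xIdx n (i 1)))))

/-!
`ψ` renames the variables of `S` along a retraction onto `x_1, …, x_{n+1}`, so its kernel is
generated by the differences of a variable and its image, that is, by `𝒜`. On the columns of `A`,
`ψ` reverses the order inside each block: the result is, up to a permutation of the columns, the
Hankel matrix with columns `(x_{m+1}, x_m)ᵀ`, whose 2×2 minors are the generators of `P_n`.
The isomorphism is then the correspondence theorem for the surjection `ψ`.
-/

section Quotients

variable {R A B : Type*} [CommSemiring R] [CommRing A] [CommRing B] [Algebra R A] [Algebra R B]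
  {f : A →ₐ[R] B} (hf : Function.Surjective f) {I : Ideal A} (hI : RingHom.ker f ≤ I)

/-- The `R`-algebra isomorphism `A ⧸ I ≃ B ⧸ f(I)` of the correspondence theorem, for a surjection
`f : A → B` and an ideal `I` containing its kernel. -/
def quotientMapEquivOfKerLE : (A ⧸ I) ≃ₐ[R] B ⧸ I.map f :=
  AlgEquiv.ofBijective (Ideal.quotientMapₐ (I.map f) f Ideal.le_comap_map)
    ⟨Ideal.quotientMap_injective' (H := Ideal.le_comap_map)
        ((Ideal.comap_map_of_surjective f hf I).trans_le (sup_le le_rfl hI)),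
      Ideal.quotientMap_surjective (H := Ideal.le_comap_map) hf⟩

theorem quotientMapEquivOfKerLE_mk (a : A) :
    quotientMapEquivOfKerLE hf hI (Ideal.Quotient.mk I a) = Ideal.Quotient.mk (I.map f) (f a) :=
  rfl

end Quotients

section RenameKernel

variable {R σ τ : Type*} [CommRing R]

theorem sub_rename_mem_span (f : σ → σ) (p : MvPolynomial σ R) :
    p - rename f p ∈ Ideal.span (Set.range fun v => (X v - X (f v) : MvPolynomial σ R)) := by
  set J := Ideal.span (Set.range fun v => (X v - X (f v) : MvPolynomial σ R))
  have h : Ideal.Quotient.mkₐ R J = (Ideal.Quotient.mkₐ R J).comp (rename f) := by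
    ext v
    simpa using Ideal.Quotient.eq.2 (Ideal.subset_span ⟨v, rfl⟩ : X v - X (f v) ∈ J)
  exact Ideal.Quotient.eq.1 (DFunLike.congr_fun h p)

theorem ker_rename_le_span (f : σ → τ) (g : τ → σ) :
    RingHom.ker (rename f : MvPolynomial σ R →ₐ[R] MvPolynomial τ R) ≤
      Ideal.span (Set.range fun v => (X v - X (g (f v)) : MvPolynomial σ R)) := by
  intro p hp
  have h := sub_rename_mem_span (g ∘ f) p
  rwa [← rename_rename, RingHom.mem_ker.1 hp, map_zero, sub_zero] at h

end RenameKernel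

section Minors

variable {R S ι κ : Type*} [CommRing R] [CommRing S]

/-- The ideal generated by the 2×2 minors of a matrix with two rows. All ordered pairs of columns
are allowed, so that no order on the column index is needed. -/
def minorIdeal (A : Matrix (Fin 2) ι R) : Ideal R :=
  Ideal.span (Set.range fun p : ι × ι => A 0 p.1 * A 1 p.2 - A 0 p.2 * A 1 p.1)

theorem minorIdeal_eq_span_lt [LinearOrder ι] (A : Matrix (Fin 2) ι R) :
    minorIdeal A =
      Ideal.span {f | ∃ c d, c < d ∧ f = A 0 c * A 1 d - A 0 d * A 1 c} := by
  refine le_antisymm (Ideal.span_le.2 ?_) (Ideal.span_mono ?_)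
  · rintro _ ⟨⟨c, d⟩, rfl⟩
    rcases lt_trichotomy c d with h | rfl | h
    · exact Ideal.subset_span ⟨c, d, h, rfl⟩
    · simp
    · rw [SetLike.mem_coe, ← neg_mem_iff]
      exact Ideal.subset_span ⟨d, c, h, neg_sub _ _⟩
  · rintro _ ⟨c, d, -, rfl⟩
    exact ⟨(c, d), rfl⟩

theorem map_minorIdeal {F : Type*} [FunLike F R S] [RingHomClass F R S] (f : F)
    (A : Matrix (Fin 2) ι R) : (minorIdeal A).map f = minorIdeal (A.map f) := by
  rw [minorIdeal, Ideal.map_span, ← Set.range_comp]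
  simp only [minorIdeal, Function.comp_def, map_sub, map_mul, Matrix.map_apply]

theorem minorIdeal_eq_span_image2_col (A : Matrix (Fin 2) ι R) :
    minorIdeal A = Ideal.span (Set.image2 (fun u v => u 0 * v 1 - v 0 * u 1)
      (Set.range A.col) (Set.range A.col)) := by
  rw [Set.image2_range]
  rfl

theorem minorIdeal_congr_range_col {A : Matrix (Fin 2) ι R} {B : Matrix (Fin 2) κ R}
    (h : Set.range A.col = Set.range B.col) : minorIdeal A = minorIdeal B := by
  rw [minorIdeal_eq_span_image2_col, h, ← minorIdeal_eq_span_image2_col]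

end Minors

section RationalNormalCurve

theorem xIdx_castSucc {n : ℕ} (m : Fin n) : xIdx n (m + 1) = m.castSucc :=
  Fin.ext (Nat.mod_eq_of_lt (by lia))

theorem xIdx_succ {n : ℕ} (m : Fin n) : xIdx n (m + 2) = m.succ :=
  Fin.ext (Nat.mod_eq_of_lt (by lia))

/-- The 2×n Hankel matrix with columns `(x_{m+1}, x_m)ᵀ`, `1 ≤ m ≤ n`, whose 2×2 minors cut out
the rational normal curve of degree `n`. -/
def rationalNormalMatrix (n : ℕ) (K : Type*) [CommRing K] :
    Matrix (Fin 2) (Fin n) (MvPolynomial (Fin (n + 1)) K) :=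
  Matrix.of ![fun m => X m.succ, fun m => X m.castSucc]

theorem rationalNormalMatrix_minor {n : ℕ} {K : Type*} [CommRing K] (c d : Fin n) :
    rationalNormalMatrix n K 0 c * rationalNormalMatrix n K 1 d -
        rationalNormalMatrix n K 0 d * rationalNormalMatrix n K 1 c =
      X (xIdx n (c + 2)) * X (xIdx n (d + 1)) - X (xIdx n (c + 1)) * X (xIdx n (d + 2)) := by
  rw [xIdx_castSucc, xIdx_castSucc, xIdx_succ, xIdx_succ, mul_comm (X c.castSucc)]
  rfl

theorem Pideal_eq_minorIdeal (n : ℕ) (K : Type*) [Field K] :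
    Pideal n K = minorIdeal (rationalNormalMatrix n K) := by
  rw [minorIdeal_eq_span_lt, Pideal]
  congr 1
  ext f
  constructor
  · rintro ⟨p, q, hp, hpq, hq, rfl⟩
    obtain ⟨c, rfl⟩ : ∃ c : Fin n, p = c + 2 := ⟨⟨p - 2, by lia⟩, by simp only; lia⟩
    obtain ⟨d, rfl⟩ : ∃ d : Fin n, q = d + 1 := ⟨⟨q - 1, by lia⟩, by simp only; lia⟩
    exact ⟨c, d, by lia, (rationalNormalMatrix_minor c d).symm⟩
  · rintro ⟨c, d, hcd, rfl⟩
    exact ⟨c + 2, d + 1, by lia, by lia, by lia, rationalNormalMatrix_minor c d⟩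

end RationalNormalCurve

section Blocks

theorem exists_mem_block {k m : ℕ} {i : ℕ → ℕ} (h0 : i 0 ≤ m) (hk : m < i k) :
    ∃ r < k, i r ≤ m ∧ m < i (r + 1) := by
  induction k with
  | zero => exact absurd hk h0.not_gt
  | succ k ih =>
    rcases lt_or_ge m (i k) with h | h
    · obtain ⟨r, hr, hm⟩ := ih h
      exact ⟨r, hr.trans k.lt_succ_self, hm⟩
    · exact ⟨k, k.lt_succ_self, h, hk⟩

/-- The columns `c` and `m`, counted from `0`, lie in block `r` and are exchanged by the reversal
of that block. -/
def IsBlockReflection (i : ℕ → ℕ) (r c m : ℕ) : Prop :=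
  i r ≤ c + 1 ∧ c + 1 < i (r + 1) ∧ c + m + 3 = i r + i (r + 1)

theorem IsBlockReflection.symm {i : ℕ → ℕ} {r c m : ℕ} (h : IsBlockReflection i r c m) :
    IsBlockReflection i r m c := by
  unfold IsBlockReflection at *
  lia

variable {n k : ℕ} {i : ℕ → ℕ}

theorem exists_isBlockReflection (hi0 : i 0 = 1) (hik : i k = n + 1)
    (hi : MonotoneOn i (Set.Iic k)) (c : Fin n) :
    ∃ r < k, 1 ≤ i r ∧ ∃ m : Fin n, IsBlockReflection i r c m := by
  obtain ⟨r, hr, hrc, hcr⟩ := exists_mem_block (k := k) (m := c + 1) (i := i) (by lia) (by lia)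
  have hfirst : i 0 ≤ i r := hi (Set.mem_Iic.2 k.zero_le) (Set.mem_Iic.2 hr.le) r.zero_le
  have hlast : i (r + 1) ≤ i k := hi (Set.mem_Iic.2 hr) (Set.mem_Iic.2 le_rfl) hr
  exact ⟨r, hr, by lia, ⟨i r + i (r + 1) - (c + 3), by lia⟩, hrc, hcr, by simp only; lia⟩

end Blocks

section Folding

variable {n k : ℕ} {K : Type*} {i : ℕ → ℕ}

/-- The map on variables underlying `ψ`: it fixes the `x_j` and sends the new variables to the
`x_j` they are glued to. -/
def foldVar (n k : ℕ) (i : ℕ → ℕ) : SVar n k → Fin (n + 1) :=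
  Sum.elim id (Sum.elim (fun j => xIdx n (i (j + 2))) ![xIdx n (i (k - 1)), xIdx n (i 1)])

@[simp]
theorem foldVar_xvS (j : ℕ) : foldVar n k i (xvS n k j) = xIdx n j := rfl

theorem foldVar_vvS {j : ℕ} (hj : j < k - 1) : foldVar n k i (vvS n k j) = xIdx n (i (j + 2)) := by
  simp [vvS, hj, foldVar]

@[simp]
theorem foldVar_s1S : foldVar n k i (s1S n k) = xIdx n (i (k - 1)) := rfl

@[simp]
theorem foldVar_s2S : foldVar n k i (s2S n k) = xIdx n (i 1) := rfl

theorem psiMap_eq_rename [Field K] : psiMap n k K i = rename (foldVar n k i) := by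
  ext v
  rcases v with j | j | t
  · simp [psiMap, foldVar]
  · simp [psiMap, foldVar]
  · fin_cases t <;> simp [psiMap, foldVar]

variable [CommRing K]

theorem rename_foldVar_surjective :
    Function.Surjective (rename (R := K) (foldVar n k i)) :=
  rename_surjective _ fun j => ⟨Sum.inl j, rfl⟩

variable (n k K i) in
/-- The sequence `𝒜`, which identifies each new variable of `S` with the `x_j` it is glued to. -/
def gluingSequence : List (MvPolynomial (SVar n k) K) :=
  ((List.range (k - 1)).map fun j => X (vvS n k j) - X (xvS n k (i (j + 2)))) ++
    [X (s1S n k) - X (xvS n k (i (k - 1))), X (s2S n k) - X (xvS n k (i 1))]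

theorem span_gluingSequence :
    Ideal.span {a | a ∈ gluingSequence n k K i} =
      RingHom.ker (rename (R := K) (foldVar n k i)) := by
  refine le_antisymm (Ideal.span_le.2 ?_)
    ((ker_rename_le_span _ Sum.inl).trans (Ideal.span_le.2 ?_))
  · intro a ha
    simp only [gluingSequence, Set.mem_ofPred_eq, List.mem_append, List.mem_map, List.mem_range,
      List.mem_cons, List.not_mem_nil, or_false] at ha
    rcases ha with ⟨j, hj, rfl⟩ | rfl | rfl
    · simp [foldVar_vvS hj]
    · simp
    · simp
  · rintro _ ⟨j | j | t, rfl⟩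
    · simp [foldVar]
    · refine Ideal.subset_span (List.mem_append_left _ (List.mem_map.2 ⟨j, ?_, ?_⟩))
      · simp
      · simp [vvS, xvS, foldVar, xIdx]
    · refine Ideal.subset_span (List.mem_append_right _ ?_)
      fin_cases t
      · exact List.mem_cons_self
      · exact List.mem_cons_of_mem _ List.mem_cons_self

/-- `A` is the matrix whose 2×2 minors generate `I_{Π,M}`; the column of `A` in position `t` of
block `r` has index `i r - 1 + t`, both positions and columns being counted from `0`. -/
structure IsBlockMatrix (i : ℕ → ℕ) (A : Matrix (Fin 2) (Fin n) (MvPolynomial (SVar n k) K)) :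
    Prop where
  row_zero : ∀ r t : ℕ, r < k → t < i (r + 1) - i r → ∀ c : Fin n, (c : ℕ) = i r - 1 + t →
    A 0 c = if t = 0 then (if r = 0 then X (s2S n k) else X (vvS n k (r - 1)))
            else X (xvS n k (i (r + 1) - t))
  row_one : ∀ r t : ℕ, r < k → t < i (r + 1) - i r → ∀ c : Fin n, (c : ℕ) = i r - 1 + t →
    A 1 c = if r = k - 1 ∧ t = i k - i (k - 1) - 1 then X (s1S n k)
            else X (xvS n k (i (r + 1) - 1 - t))

namespace IsBlockMatrix

variable {A : Matrix (Fin 2) (Fin n) (MvPolynomial (SVar n k) K)} {r : ℕ} {c m : Fin n}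

theorem rename_row_zero (hA : IsBlockMatrix i A) (hr : r < k) (hir : 1 ≤ i r)
    (h : IsBlockReflection i r c m) : rename (foldVar n k i) (A 0 c) = X m.succ := by
  obtain ⟨hrc, hcr, hcm⟩ := h
  rw [hA.row_zero r (c + 1 - i r) hr (by lia) c (by lia), ← xIdx_succ]
  split_ifs with ht h0
  · subst h0
    rw [rename_X, foldVar_s2S, show i 1 = m + 2 by simp only [zero_add] at hcm; lia]
  · rw [rename_X, foldVar_vvS (by lia), show r - 1 + 2 = r + 1 by lia,
      show i (r + 1) = m + 2 by lia]
  · rw [rename_X, foldVar_xvS, show i (r + 1) - (c + 1 - i r) = m + 2 by lia]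

theorem rename_row_one (hA : IsBlockMatrix i A) (hr : r < k) (hir : 1 ≤ i r)
    (h : IsBlockReflection i r c m) : rename (foldVar n k i) (A 1 c) = X m.castSucc := by
  obtain ⟨hrc, hcr, hcm⟩ := h
  rw [hA.row_one r (c + 1 - i r) hr (by lia) c (by lia), ← xIdx_castSucc]
  split_ifs with hlast
  · obtain ⟨rfl, ht⟩ := hlast
    rw [Nat.sub_add_cancel (by lia)] at hcr hcm
    rw [rename_X, foldVar_s1S, show i (k - 1) = m + 1 by lia]
  · rw [rename_X, foldVar_xvS, show i (r + 1) - 1 - (c + 1 - i r) = m + 1 by lia]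

theorem rename_col (hA : IsBlockMatrix i A) (hr : r < k) (hir : 1 ≤ i r)
    (h : IsBlockReflection i r c m) :
    (A.map (rename (foldVar n k i))).col c = (rationalNormalMatrix n K).col m := by
  ext1 s
  fin_cases s
  · exact hA.rename_row_zero hr hir h
  · exact hA.rename_row_one hr hir h

theorem map_minorIdeal_rename (hA : IsBlockMatrix i A) (hi0 : i 0 = 1) (hik : i k = n + 1)
    (hi : MonotoneOn i (Set.Iic k)) :
    (minorIdeal A).map (rename (foldVar n k i)) = minorIdeal (rationalNormalMatrix n K) := by
  rw [map_minorIdeal]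
  refine minorIdeal_congr_range_col (Set.Subset.antisymm ?_ ?_)
  · rintro _ ⟨c, rfl⟩
    obtain ⟨r, hr, hir, m, h⟩ := exists_isBlockReflection hi0 hik hi c
    exact ⟨m, (hA.rename_col hr hir h).symm⟩
  · rintro _ ⟨m, rfl⟩
    obtain ⟨r, hr, hir, c, h⟩ := exists_isBlockReflection hi0 hik hi m
    exact ⟨c, hA.rename_col hr hir h.symm⟩

end IsBlockMatrix

end Folding

theorem statement_15_general {K : Type*} [CommRing K] {n k : ℕ} {i : ℕ → ℕ} (hi0 : i 0 = 1)
    (hik : i k = n + 1) (hi : MonotoneOn i (Set.Iic k))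
    {A : Matrix (Fin 2) (Fin n) (MvPolynomial (SVar n k) K)} (hA : IsBlockMatrix i A) :
    Ideal.map (rename (foldVar n k i))
      (minorIdeal A ⊔ Ideal.span {a | a ∈ gluingSequence n k K i}) =
        minorIdeal (rationalNormalMatrix n K) ∧
    ∃ e : (MvPolynomial (SVar n k) K ⧸
            (minorIdeal A ⊔ Ideal.span {a | a ∈ gluingSequence n k K i})) ≃ₐ[K]
          (MvPolynomial (Fin (n + 1)) K ⧸ minorIdeal (rationalNormalMatrix n K)),
      ∀ f : MvPolynomial (SVar n k) K,
        e (Ideal.Quotient.mk _ f) = Ideal.Quotient.mk _ (rename (foldVar n k i) f) := by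
  rw [span_gluingSequence]
  have hmap : Ideal.map (rename (foldVar n k i))
      (minorIdeal A ⊔ RingHom.ker (rename (R := K) (foldVar n k i))) =
        minorIdeal (rationalNormalMatrix n K) := by
    rw [Ideal.map_sup, (Ideal.map_eq_bot_iff_le_ker _).2 le_rfl, sup_bot_eq,
      hA.map_minorIdeal_rename hi0 hik hi]
  refine ⟨hmap, ?_⟩
  rw [← hmap]
  exact ⟨quotientMapEquivOfKerLE rename_foldVar_surjective le_sup_right,
    quotientMapEquivOfKerLE_mk _ _⟩

/-- `ψ(I_{Π,M} + ⟨𝒜⟩) = P_n`, and `ψ` induces a `K`-algebra isomorphism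
`S/(I_{Π,M} + ⟨𝒜⟩) ≅ R_{n+1}/P_n`. -/
theorem statement_15 (K : Type*) [Field K] (n k : ℕ) (hn : 2 ≤ n) (hk : 2 ≤ k)
    (i : ℕ → ℕ) (hi0 : i 0 = 1) (hik : i k = n + 1) (himono : ∀ r < k, i r < i (r + 1))
    (A : Matrix (Fin 2) (Fin n) (MvPolynomial (SVar n k) K))
    (hA1 : ∀ r t : ℕ, r < k → t < i (r + 1) - i r → ∀ c : Fin n, (c : ℕ) = i r - 1 + t →
      A 1 c = if r = k - 1 ∧ t = i k - i (k - 1) - 1 then X (s1S n k)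
              else X (xvS n k (i (r + 1) - 1 - t)))
    (hA0 : ∀ r t : ℕ, r < k → t < i (r + 1) - i r → ∀ c : Fin n, (c : ℕ) = i r - 1 + t →
      A 0 c = if t = 0 then (if r = 0 then X (s2S n k) else X (vvS n k (r - 1)))
              else X (xvS n k (i (r + 1) - t)))
    (Itop : Ideal (MvPolynomial (SVar n k) K))
    (hItop : Itop = Ideal.span { f | ∃ c₁ c₂ : Fin n, c₁ < c₂ ∧
      f = A 0 c₁ * A 1 c₂ - A 0 c₂ * A 1 c₁ })
    (As : List (MvPolynomial (SVar n k) K))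
    (hAs : As = ((List.range (k - 1)).map fun j => X (vvS n k j) - X (xvS n k (i (j + 2))))
      ++ [X (s1S n k) - X (xvS n k (i (k - 1))), X (s2S n k) - X (xvS n k (i 1))]) :
    Ideal.map (psiMap n k K i) (Itop ⊔ Ideal.span {a | a ∈ As}) = Pideal n K ∧
    ∃ e : (MvPolynomial (SVar n k) K ⧸ (Itop ⊔ Ideal.span {a | a ∈ As})) ≃ₐ[K]
          (MvPolynomial (Fin (n + 1)) K ⧸ Pideal n K),
      ∀ f : MvPolynomial (SVar n k) K,
        e (Ideal.Quotient.mk _ f) = Ideal.Quotient.mk _ (psiMap n k K i f) := by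
  have hi : StrictMonoOn i (Set.Iic k) :=
    strictMonoOn_of_lt_add_one Set.ordConnected_Iic fun r _ _ hr => himono r hr
  rw [psiMap_eq_rename, Pideal_eq_minorIdeal, hItop, ← minorIdeal_eq_span_lt, hAs]
  exact statement_15_general hi0 hik hi.monotoneOn ⟨hA0, hA1⟩
end
end

section
/- Let ψ : S → R_{n+1} be the K-algebra homomorphism determined by ψ(x_i) = x_i for 1 ≤ i ≤ n+1, ψ(x_{v_j}) = x_{i_{j+2}} for 0 ≤ j ≤ k−2, ψ(x_{s_1}) = x_{i_{k−1}}, and ψ(x_{s_2}) = x_{i_1}. Then ψ(M_{Π,M} + ⟨𝒜⟩) = M; consequently ψ induces a K-algebra isomorphism S/(M_{Π,M} + ⟨𝒜⟩) ≅ R_{n+1}/M (equivalently, S/M_{Π,M} ⊗_S S/⟨𝒜⟩ ≅ R_{n+1}/M as R_{n+1}-modules). -/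
noncomputable section

open MvPolynomial

/-- The Cohen–Macaulay initial monomial ideal `M ⊆ R_{n+1}` of `P_n` attached to the
sequence `1 = i_0 < i_1 < ⋯ < i_k = n + 1` (Conca–Negri–Rossi): generated by the
main diagonals `x_v x_{r+1}` with `v + 1 ≤ i_j < r + 1` for some `j`, and the
anti-diagonals `x_{v+1} x_r` with `i_j < v + 1 < r + 1 ≤ i_{j+1}` for some `j`. -/
def CMinitIdeal (n k : ℕ) (K : Type*) [Field K] (i : ℕ → ℕ) :
    Ideal (MvPolynomial (Fin (n + 1)) K) :=
  Ideal.span { f |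
    (∃ v r : ℕ, 1 ≤ v ∧ v < r ∧ r ≤ n ∧ (∃ j, j ≤ k ∧ v + 1 ≤ i j ∧ i j < r + 1) ∧
      f = X (xIdx n v) * X (xIdx n (r + 1))) ∨
    (∃ v r : ℕ, 1 ≤ v ∧ v < r ∧ r ≤ n ∧ (∃ j, j < k ∧ i j < v + 1 ∧ r + 1 ≤ i (j + 1)) ∧
      f = X (xIdx n (v + 1)) * X (xIdx n r)) }

/-!
The integers `i_0 < ⋯ < i_k` cut the indices `1, …, n` into the blocks `[i_r, i_{r+1})`. Let `σ` be
the involution of `{1, …, n}` reversing every block. Under `ψ` the `c`-th column of `A` becomes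
`(x_{σ(c)+1}, x_{σ(c)})ᵀ`, so `ψ(M_{Π,M})` is generated by the products `x_{σ(c)} x_{σ(d)+1}` with
`c < d`, that is, by the `x_a x_{b+1}` with `σ(a) < σ(b)`. This inequality says that either `a < b`
lie in different blocks or `b < a` lie in the same block, and these are the two families of
generators of `M`. Since `ψ` is a retraction with kernel `⟨𝒜⟩`, it induces the isomorphism.
-/

section BlockReversal

variable {i : ℕ → ℕ} {k a b v r : ℕ}

/-- The index `r` of the block `[i r, i (r + 1))` containing `v`. The choice of the greatest `r ≤ k`
with `i r ≤ v` makes this total; it is meaningful for `i 0 ≤ v < i k`. -/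
def blockIndex (i : ℕ → ℕ) (k v : ℕ) : ℕ := Nat.findGreatest (fun r => i r ≤ v) k

theorem apply_blockIndex_le (h0 : i 0 ≤ v) : i (blockIndex i k v) ≤ v :=
  Nat.findGreatest_spec (P := fun r => i r ≤ v) (Nat.zero_le k) h0

theorem apply_blockIndex_le_of_ne_zero (h : blockIndex i k v ≠ 0) : i (blockIndex i k v) ≤ v :=
  Nat.findGreatest_of_ne_zero (P := fun r => i r ≤ v) rfl h

theorem lt_apply_of_blockIndex_lt (hr : blockIndex i k v < r) (hrk : r ≤ k) : v < i r :=
  not_le.mp (Nat.findGreatest_is_greatest (P := fun r => i r ≤ v) hr hrk)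

theorem blockIndex_lt (hv : v ∈ Set.Ico (i 0) (i k)) : blockIndex i k v < k := by
  refine (Nat.findGreatest_le k).lt_of_ne fun h => ?_
  have hle : i (blockIndex i k v) ≤ v := apply_blockIndex_le hv.1
  rw [show blockIndex i k v = k from h] at hle
  exact hle.not_gt hv.2

theorem mem_Ico_blockIndex (hv : v ∈ Set.Ico (i 0) (i k)) :
    v ∈ Set.Ico (i (blockIndex i k v)) (i (blockIndex i k v + 1)) :=
  ⟨apply_blockIndex_le hv.1, lt_apply_of_blockIndex_lt (Nat.lt_succ_self _) (blockIndex_lt hv)⟩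

theorem blockIndex_lt_blockIndex_iff (hi : MonotoneOn i (Set.Iic k)) (ha : i 0 ≤ a) :
    blockIndex i k a < blockIndex i k b ↔ ∃ j ≤ k, a < i j ∧ i j ≤ b := by
  constructor
  · intro h
    have hk : blockIndex i k b ≤ k := Nat.findGreatest_le k
    exact ⟨_, hk, lt_apply_of_blockIndex_lt h hk, apply_blockIndex_le_of_ne_zero h.ne_bot⟩
  · rintro ⟨j, hj, haj, hjb⟩
    refine lt_of_lt_of_le (not_le.mp fun hja => ?_) (Nat.le_findGreatest hj hjb)
    have : i j ≤ a := (hi hj (Nat.findGreatest_le k) hja).trans (apply_blockIndex_le ha)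
    exact this.not_gt haj

theorem blockIndex_eq (hi : MonotoneOn i (Set.Iic k)) (hr : r < k)
    (hv : v ∈ Set.Ico (i r) (i (r + 1))) : blockIndex i k v = r := by
  refine le_antisymm (not_lt.mp fun h => ?_) (Nat.le_findGreatest hr.le hv.1)
  have hnext : i (r + 1) ≤ i (blockIndex i k v) := hi hr (Nat.findGreatest_le k) h
  have hle : i (blockIndex i k v) ≤ v := apply_blockIndex_le_of_ne_zero h.ne_bot
  exact (hnext.trans hle).not_gt hv.2

theorem blockIndex_eq_blockIndex_iff (hi : MonotoneOn i (Set.Iic k))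
    (ha : a ∈ Set.Ico (i 0) (i k)) (hb : b ∈ Set.Ico (i 0) (i k)) (hba : b < a) :
    blockIndex i k a = blockIndex i k b ↔ ∃ j < k, i j ≤ b ∧ a < i (j + 1) := by
  constructor
  · intro h
    exact ⟨_, blockIndex_lt hb, (mem_Ico_blockIndex hb).1, h ▸ (mem_Ico_blockIndex ha).2⟩
  · rintro ⟨j, hj, hjb, haj⟩
    rw [blockIndex_eq hi hj ⟨hjb.trans hba.le, haj⟩, blockIndex_eq hi hj ⟨hjb, hba.trans haj⟩]

/-- The involution `σ` of `[i 0, i k)` that reverses each block `[i r, i (r + 1))`. -/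
def blockReversal (i : ℕ → ℕ) (k v : ℕ) : ℕ :=
  i (blockIndex i k v) + i (blockIndex i k v + 1) - 1 - v

theorem blockReversal_eq (hi : MonotoneOn i (Set.Iic k)) (hr : r < k)
    (hv : v ∈ Set.Ico (i r) (i (r + 1))) : blockReversal i k v = i r + i (r + 1) - 1 - v := by
  rw [blockReversal, blockIndex_eq hi hr hv]

theorem blockReversal_mem_block (hv : v ∈ Set.Ico (i 0) (i k)) :
    blockReversal i k v ∈ Set.Ico (i (blockIndex i k v)) (i (blockIndex i k v + 1)) := by
  have ⟨hl, hu⟩ := mem_Ico_blockIndex hv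
  constructor <;> rw [blockReversal] <;> omega

theorem blockReversal_mem (hi : MonotoneOn i (Set.Iic k)) (hv : v ∈ Set.Ico (i 0) (i k)) :
    blockReversal i k v ∈ Set.Ico (i 0) (i k) := by
  have hk := blockIndex_lt hv
  have ⟨hl, hu⟩ := blockReversal_mem_block hv
  exact ⟨(hi k.zero_le hk.le (Nat.zero_le _)).trans hl, hu.trans_le (hi hk Set.self_mem_Iic hk)⟩

theorem blockReversal_blockReversal (hi : MonotoneOn i (Set.Iic k))
    (hv : v ∈ Set.Ico (i 0) (i k)) : blockReversal i k (blockReversal i k v) = v := by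
  have ⟨hl, hu⟩ := mem_Ico_blockIndex hv
  rw [blockReversal_eq hi (blockIndex_lt hv) (blockReversal_mem_block hv), blockReversal]
  omega

theorem blockReversal_lt_blockReversal_iff (hi : MonotoneOn i (Set.Iic k))
    (ha : a ∈ Set.Ico (i 0) (i k)) (hb : b ∈ Set.Ico (i 0) (i k)) :
    blockReversal i k a < blockReversal i k b ↔
      (a < b ∧ ∃ j ≤ k, a < i j ∧ i j ≤ b) ∨ (b < a ∧ ∃ j < k, i j ≤ b ∧ a < i (j + 1)) := by
  have hau := (mem_Ico_blockIndex ha).2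
  have ⟨hbl, hbu⟩ := mem_Ico_blockIndex hb
  have ⟨hσal, hσau⟩ := blockReversal_mem_block ha
  have ⟨hσbl, hσbu⟩ := blockReversal_mem_block hb
  have hak := blockIndex_lt ha
  have hbk := blockIndex_lt hb
  rw [← blockIndex_lt_blockIndex_iff hi ha.1,
    ← and_congr_right (blockIndex_eq_blockIndex_iff hi ha hb)]
  rcases lt_trichotomy (blockIndex i k a) (blockIndex i k b) with h | h | h
  · have : i (blockIndex i k a + 1) ≤ i (blockIndex i k b) := hi hak hbk.le h
    omega
  · rw [h] at hau
    simp only [blockReversal, h, lt_irrefl, and_false, false_or, and_true]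
    omega
  · have : i (blockIndex i k b + 1) ≤ i (blockIndex i k a) := hi hbk hak.le h
    omega

end BlockReversal

theorem exists_quotient_algEquiv_quotient_map {R A B : Type*} [CommSemiring R] [CommRing A]
    [CommRing B] [Algebra R A] [Algebra R B] {f : A →ₐ[R] B} (hf : Function.Surjective f)
    {I : Ideal A} (hI : RingHom.ker f ≤ I) :
    ∃ e : (A ⧸ I) ≃ₐ[R] (B ⧸ I.map f),
      ∀ a, e (Ideal.Quotient.mk I a) = Ideal.Quotient.mk (I.map f) (f a) := by
  have hker : I = RingHom.ker ((Ideal.Quotient.mkₐ R (I.map f)).comp f) := by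
    ext a
    rw [RingHom.mem_ker, AlgHom.comp_apply, Ideal.Quotient.mkₐ_eq_mk,
      Ideal.Quotient.eq_zero_iff_mem, ← Ideal.mem_comap, Ideal.comap_map_of_surjective' f hf,
      sup_eq_left.mpr hI]
  exact ⟨(Ideal.quotientEquivAlgOfEq R hker).trans (Ideal.quotientKerAlgEquivOfSurjective
    ((Ideal.Quotient.mkₐ_surjective R _).comp hf)), fun _ => rfl⟩

section Retraction

variable {R σ τ : Type*} [CommRing R]

theorem aeval_sumElim_X_rename (g : τ → MvPolynomial σ R) (p : MvPolynomial σ R) :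
    aeval (Sum.elim X g) (rename Sum.inl p) = p := by
  rw [aeval_rename, Sum.elim_comp_inl, aeval_X_left_apply]

theorem ker_aeval_sumElim_X (g : τ → MvPolynomial σ R) :
    RingHom.ker (aeval (R := R) (Sum.elim X g)) =
      Ideal.span (Set.range fun t => X (Sum.inr t) - rename Sum.inl (g t)) := by
  set J := Ideal.span (Set.range fun t => X (Sum.inr t) - rename Sum.inl (g t))
  apply le_antisymm
  · have hmk : Ideal.Quotient.mkₐ R J =
        ((Ideal.Quotient.mkₐ R J).comp (rename Sum.inl)).comp (aeval (Sum.elim X g)) := by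
      ext (s | t)
      · simp
      · have ht : X (Sum.inr t) - rename Sum.inl (g t) ∈ J := Ideal.subset_span ⟨t, rfl⟩
        simpa using Ideal.Quotient.eq.mpr ht
    intro p hp
    have hmkp := DFunLike.congr_fun hmk p
    rw [AlgHom.comp_apply, RingHom.mem_ker.mp hp, map_zero] at hmkp
    exact Ideal.Quotient.eq_zero_iff_mem.mp hmkp
  · rw [Ideal.span_le]
    rintro _ ⟨t, rfl⟩
    rw [SetLike.mem_coe, RingHom.mem_ker, map_sub, aeval_X, aeval_sumElim_X_rename, Sum.elim_inr,
      sub_self]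

end Retraction

/-- The ideal generated by the anti-diagonal products `A_{2,c} A_{1,d}`, `c < d`, of a two-row
matrix; for the matrix of the paper it is `M_{Π,M}`. -/
def antidiagonalIdeal {R : Type*} [CommSemiring R] {n : ℕ} (A : Matrix (Fin 2) (Fin n) R) :
    Ideal R :=
  Ideal.span { f | ∃ c d : Fin n, c < d ∧ f = A 1 c * A 0 d }

section Specialization

variable {K : Type*} [Field K] {n k : ℕ} {i : ℕ → ℕ}
  {A : Matrix (Fin 2) (Fin n) (MvPolynomial (SVar n k) K)}

/-- The sequence `𝒜` of differences between each of the additional variables of `S` and its image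
under `ψ`. -/
def specializationSeq (n k : ℕ) (K : Type*) [Field K] (i : ℕ → ℕ) :
    List (MvPolynomial (SVar n k) K) :=
  ((List.range (k - 1)).map fun j => X (vvS n k j) - X (xvS n k (i (j + 2)))) ++
    [X (s1S n k) - X (xvS n k (i (k - 1))), X (s2S n k) - X (xvS n k (i 1))]

/-- The block description of the matrix `A` of the paper. The `t`-th column of block `r`, counting
both from zero, is column `i r - 1 + t` of `A`; row `0` is the top row. -/
structure IsBlockMatrix_s16 (i : ℕ → ℕ) (A : Matrix (Fin 2) (Fin n) (MvPolynomial (SVar n k) K)) :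
    Prop where
  bottom : ∀ r t : ℕ, r < k → t < i (r + 1) - i r → ∀ c : Fin n, (c : ℕ) = i r - 1 + t →
    A 1 c = if r = k - 1 ∧ t = i k - i (k - 1) - 1 then X (s1S n k)
            else X (xvS n k (i (r + 1) - 1 - t))
  top : ∀ r t : ℕ, r < k → t < i (r + 1) - i r → ∀ c : Fin n, (c : ℕ) = i r - 1 + t →
    A 0 c = if t = 0 then (if r = 0 then X (s2S n k) else X (vvS n k (r - 1)))
            else X (xvS n k (i (r + 1) - t))

theorem psiMap_xvS (j : ℕ) : psiMap n k K i (X (xvS n k j)) = X (xIdx n j) := by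
  simp [psiMap, xvS, xIdx]

theorem psiMap_vvS {j : ℕ} (hj : j < k - 1) :
    psiMap n k K i (X (vvS n k j)) = X (xIdx n (i (j + 2))) := by
  simp [psiMap, vvS, hj]

theorem psiMap_s1S : psiMap n k K i (X (s1S n k)) = X (xIdx n (i (k - 1))) := by
  simp [psiMap, s1S]

theorem psiMap_s2S : psiMap n k K i (X (s2S n k)) = X (xIdx n (i 1)) := by
  simp [psiMap, s2S]

theorem psiMap_surjective : Function.Surjective (psiMap n k K i) :=
  fun p => ⟨_, aeval_sumElim_X_rename _ p⟩

theorem ker_psiMap :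
    RingHom.ker (psiMap n k K i) = Ideal.span {a | a ∈ specializationSeq n k K i} := by
  refine (ker_aeval_sumElim_X _).trans (congrArg Ideal.span (Set.ext fun a => ?_))
  constructor
  · rintro ⟨j | t, rfl⟩
    · exact List.mem_append_left _ (List.mem_map.mpr
        ⟨j, List.mem_range.mpr j.2, by simp [vvS, xvS, xIdx]⟩)
    · fin_cases t <;> simp [specializationSeq, s1S, s2S, xvS, xIdx]
  · intro ha
    simp only [specializationSeq, Set.mem_ofPred_eq, List.mem_append, List.mem_map,
      List.mem_range, List.mem_cons, List.not_mem_nil, or_false] at ha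
    rcases ha with ⟨j, hj, rfl⟩ | rfl | rfl
    · exact ⟨Sum.inl ⟨j, hj⟩, by simp [vvS, hj, xvS, xIdx]⟩
    · exact ⟨Sum.inr 0, by simp [s1S, xvS, xIdx]⟩
    · exact ⟨Sum.inr 1, by simp [s2S, xvS, xIdx]⟩

theorem exists_block_coordinates (hi : MonotoneOn i (Set.Iic k)) (hi0 : i 0 = 1)
    (hik : i k = n + 1) (c : Fin n) :
    ∃ r t, r < k ∧ t < i (r + 1) - i r ∧ (c : ℕ) = i r - 1 + t ∧
      blockReversal i k (c + 1) = i (r + 1) - 1 - t := by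
  have hc : (c : ℕ) + 1 ∈ Set.Ico (i 0) (i k) := ⟨by omega, by omega⟩
  have hr : blockIndex i k (c + 1) < k := blockIndex_lt hc
  have ⟨hl, hu⟩ := mem_Ico_blockIndex hc
  have hpos : i 0 ≤ i (blockIndex i k (c + 1)) := hi k.zero_le hr.le (Nat.zero_le _)
  refine ⟨blockIndex i k (c + 1), c + 1 - i (blockIndex i k (c + 1)), hr, by omega, by omega, ?_⟩
  rw [blockReversal]
  omega

namespace IsBlockMatrix_s16

theorem psiMap_bottom (hA : IsBlockMatrix_s16 i A) (hi : MonotoneOn i (Set.Iic k)) (hi0 : i 0 = 1)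
    (hik : i k = n + 1) (c : Fin n) :
    psiMap n k K i (A 1 c) = X (xIdx n (blockReversal i k (c + 1))) := by
  obtain ⟨r, t, hr, ht, hc, hσ⟩ := exists_block_coordinates hi hi0 hik c
  rw [hA.bottom r t hr ht c hc, hσ]
  split_ifs with hlast
  · obtain ⟨rfl, rfl⟩ := hlast
    rw [psiMap_s1S]
    rw [Nat.sub_add_cancel (by omega : 1 ≤ k)] at ht ⊢
    congr 2
    omega
  · exact psiMap_xvS _

theorem psiMap_top (hA : IsBlockMatrix_s16 i A) (hi : MonotoneOn i (Set.Iic k)) (hi0 : i 0 = 1)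
    (hik : i k = n + 1) (c : Fin n) :
    psiMap n k K i (A 0 c) = X (xIdx n (blockReversal i k (c + 1) + 1)) := by
  obtain ⟨r, t, hr, ht, hc, hσ⟩ := exists_block_coordinates hi hi0 hik c
  have hσ' : blockReversal i k (c + 1) + 1 = i (r + 1) - t := by omega
  rw [hA.top r t hr ht c hc, hσ']
  split_ifs with ht0 hr0
  · rw [ht0, hr0, psiMap_s2S, Nat.sub_zero]
  · rw [ht0, psiMap_vvS (by omega), Nat.sub_zero, show r - 1 + 2 = r + 1 by omega]
  · exact psiMap_xvS _

end IsBlockMatrix_s16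

theorem CMinitIdeal_eq_span_blockReversal_lt (hi : MonotoneOn i (Set.Iic k)) (hi0 : i 0 = 1)
    (hik : i k = n + 1) :
    CMinitIdeal n k K i = Ideal.span { f | ∃ a ∈ Set.Ico (i 0) (i k), ∃ b ∈ Set.Ico (i 0) (i k),
      blockReversal i k a < blockReversal i k b ∧ f = X (xIdx n a) * X (xIdx n (b + 1)) } := by
  refine congrArg Ideal.span (Set.ext fun f => ?_)
  constructor
  · rintro (⟨v, r, hv, hvr, hr, ⟨j, hj, hvj, hjr⟩, rfl⟩ |
      ⟨v, r, hv, hvr, hr, ⟨j, hj, hjv, hrj⟩, rfl⟩)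
    all_goals
      have hv' : v ∈ Set.Ico (i 0) (i k) := ⟨by omega, by omega⟩
      have hr' : r ∈ Set.Ico (i 0) (i k) := ⟨by omega, by omega⟩
    · exact ⟨v, hv', r, hr', (blockReversal_lt_blockReversal_iff hi hv' hr').mpr
        (Or.inl ⟨hvr, j, hj, hvj, Nat.le_of_lt_succ hjr⟩), rfl⟩
    · exact ⟨r, hr', v, hv', (blockReversal_lt_blockReversal_iff hi hr' hv').mpr
        (Or.inr ⟨hvr, j, hj, Nat.le_of_lt_succ hjv, hrj⟩), mul_comm _ _⟩
  · rintro ⟨a, ha, b, hb, hab, rfl⟩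
    have ⟨ha0, hak⟩ := ha
    have ⟨hb0, hbk⟩ := hb
    rcases (blockReversal_lt_blockReversal_iff hi ha hb).mp hab with
      ⟨hlt, j, hj, haj, hjb⟩ | ⟨hlt, j, hj, hjb, haj⟩
    · exact Or.inl ⟨a, b, by omega, hlt, by omega, ⟨j, hj, haj, Nat.lt_succ_of_le hjb⟩, rfl⟩
    · exact Or.inr ⟨b, a, by omega, hlt, by omega, ⟨j, hj, Nat.lt_succ_of_le hjb, haj⟩,
        mul_comm _ _⟩

theorem map_psiMap_antidiagonalIdeal (hi : MonotoneOn i (Set.Iic k)) (hi0 : i 0 = 1)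
    (hik : i k = n + 1) (hA : IsBlockMatrix_s16 i A) :
    Ideal.map (psiMap n k K i) (antidiagonalIdeal A) = CMinitIdeal n k K i := by
  have hcol (c : Fin n) : (c : ℕ) + 1 ∈ Set.Ico (i 0) (i k) := ⟨by omega, by omega⟩
  have exists_col {m : ℕ} (hm : m ∈ Set.Ico (i 0) (i k)) : ∃ c : Fin n, (c : ℕ) + 1 = m :=
    have ⟨hl, hu⟩ := hm
    ⟨⟨m - 1, by omega⟩, Nat.sub_add_cancel (hi0 ▸ hl)⟩
  have map_product (c d : Fin n) : psiMap n k K i (A 1 c * A 0 d) =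
      X (xIdx n (blockReversal i k (c + 1))) * X (xIdx n (blockReversal i k (d + 1) + 1)) := by
    rw [map_mul, hA.psiMap_bottom hi hi0 hik, hA.psiMap_top hi hi0 hik]
  rw [antidiagonalIdeal, Ideal.map_span, CMinitIdeal_eq_span_blockReversal_lt hi hi0 hik]
  refine congrArg Ideal.span (Set.ext fun f => ?_)
  constructor
  · rintro ⟨_, ⟨c, d, hcd, rfl⟩, rfl⟩
    refine ⟨_, blockReversal_mem hi (hcol c), _, blockReversal_mem hi (hcol d), ?_, map_product c d⟩
    rw [blockReversal_blockReversal hi (hcol c), blockReversal_blockReversal hi (hcol d)]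
    exact Nat.succ_lt_succ hcd
  · rintro ⟨a, ha, b, hb, hab, rfl⟩
    obtain ⟨c, hc⟩ := exists_col (blockReversal_mem hi ha)
    obtain ⟨d, hd⟩ := exists_col (blockReversal_mem hi hb)
    refine ⟨_, ⟨c, d, by rw [Fin.lt_def]; omega, rfl⟩, ?_⟩
    rw [map_product, hc, hd, blockReversal_blockReversal hi ha, blockReversal_blockReversal hi hb]

theorem statement_16_general (hi : MonotoneOn i (Set.Iic k)) (hi0 : i 0 = 1)
    (hik : i k = n + 1) (hA : IsBlockMatrix_s16 i A) :
    Ideal.map (psiMap n k K i)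
        (antidiagonalIdeal A ⊔ Ideal.span {a | a ∈ specializationSeq n k K i}) =
      CMinitIdeal n k K i ∧
    ∃ e : (MvPolynomial (SVar n k) K ⧸
            (antidiagonalIdeal A ⊔ Ideal.span {a | a ∈ specializationSeq n k K i})) ≃ₐ[K]
          (MvPolynomial (Fin (n + 1)) K ⧸ CMinitIdeal n k K i),
      ∀ f : MvPolynomial (SVar n k) K,
        e (Ideal.Quotient.mk _ f) = Ideal.Quotient.mk _ (psiMap n k K i f) := by
  have hmap : Ideal.map (psiMap n k K i) (antidiagonalIdeal A ⊔ RingHom.ker (psiMap n k K i)) =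
      CMinitIdeal n k K i := by
    rw [Ideal.map_sup, map_psiMap_antidiagonalIdeal hi hi0 hik hA,
      (Ideal.map_eq_bot_iff_le_ker _).mpr le_rfl, sup_bot_eq]
  rw [← ker_psiMap]
  exact ⟨hmap, hmap ▸ exists_quotient_algEquiv_quotient_map psiMap_surjective le_sup_right⟩

end Specialization

/-- `ψ(M_{Π,M} + ⟨𝒜⟩) = M`, and `ψ` induces a `K`-algebra isomorphism
`S/(M_{Π,M} + ⟨𝒜⟩) ≅ R_{n+1}/M`. -/
theorem statement_16 (K : Type*) [Field K] (n k : ℕ) (hn : 2 ≤ n) (hk : 2 ≤ k)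
    (i : ℕ → ℕ) (hi0 : i 0 = 1) (hik : i k = n + 1) (himono : ∀ r < k, i r < i (r + 1))
    (A : Matrix (Fin 2) (Fin n) (MvPolynomial (SVar n k) K))
    (hA1 : ∀ r t : ℕ, r < k → t < i (r + 1) - i r → ∀ c : Fin n, (c : ℕ) = i r - 1 + t →
      A 1 c = if r = k - 1 ∧ t = i k - i (k - 1) - 1 then X (s1S n k)
              else X (xvS n k (i (r + 1) - 1 - t)))
    (hA0 : ∀ r t : ℕ, r < k → t < i (r + 1) - i r → ∀ c : Fin n, (c : ℕ) = i r - 1 + t →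
      A 0 c = if t = 0 then (if r = 0 then X (s2S n k) else X (vvS n k (r - 1)))
              else X (xvS n k (i (r + 1) - t)))
    (Mpark : Ideal (MvPolynomial (SVar n k) K))
    (hMpark : Mpark = Ideal.span { f | ∃ c₁ c₂ : Fin n, c₁ < c₂ ∧ f = A 1 c₁ * A 0 c₂ })
    (As : List (MvPolynomial (SVar n k) K))
    (hAs : As = ((List.range (k - 1)).map fun j => X (vvS n k j) - X (xvS n k (i (j + 2))))
      ++ [X (s1S n k) - X (xvS n k (i (k - 1))), X (s2S n k) - X (xvS n k (i 1))]) :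
    Ideal.map (psiMap n k K i) (Mpark ⊔ Ideal.span {a | a ∈ As}) = CMinitIdeal n k K i ∧
    ∃ e : (MvPolynomial (SVar n k) K ⧸ (Mpark ⊔ Ideal.span {a | a ∈ As})) ≃ₐ[K]
          (MvPolynomial (Fin (n + 1)) K ⧸ CMinitIdeal n k K i),
      ∀ f : MvPolynomial (SVar n k) K,
        e (Ideal.Quotient.mk _ f) = Ideal.Quotient.mk _ (psiMap n k K i f) := by
  subst hMpark hAs
  exact statement_16_general (strictMonoOn_Iic_of_lt_succ himono).monotoneOn hi0 hik ⟨hA1, hA0⟩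
end
end
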